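/- Suppose μ is a T-ergodic Borel probability measure on Ω that has a local product structure and full support (supp μ = Ω), suppose T has a fixed point in Ω, and suppose the set 𝔏(A,μ) = {k ∈ [0,π] : L(A^{(k)}, μ) = 0} is infinite. Then for every T-periodic point p ∈ Ω, the spectrum of the operator H̃_p coincides with the interval [−1, 1]. -/

import Mathlib

open Real MeasureTheory Filter Topology Matrix Set

noncomputable section

/-- The left shift on bi-infinite sequences: `(Tω)_n = ω_{n+1}`. -/
def shift (ω : ℤ → ℕ) : ℤ → ℕ := fun n => ω (n + 1)

/-- The subshift of finite type: sequences with letters in `{1,…,ℓ}` and all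
transitions `(ω_n, ω_{n+1})` in the allowed set `W`. -/
def SFT (ℓ : ℕ) (W : Set (ℕ × ℕ)) : Set (ℤ → ℕ) :=
  {ω | (∀ n, 1 ≤ ω n ∧ ω n ≤ ℓ) ∧ ∀ n, (ω n, ω (n + 1)) ∈ W}

/-- The cocycle matrix
`A^{(k)}(ω) = √(ω₀/ω₋₁)·[[((ω₀+ω₋₁)/ω₀)·cos k, −ω₋₁/ω₀],[1, 0]]`. -/
def Acoc (k : ℝ) (ω : ℤ → ℕ) : Matrix (Fin 2) (Fin 2) ℝ :=
  Real.sqrt ((ω 0 : ℝ) / (ω (-1) : ℝ)) •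
    !![((ω 0 : ℝ) + (ω (-1) : ℝ)) / (ω 0 : ℝ) * Real.cos k, -((ω (-1) : ℝ) / (ω 0 : ℝ));
       (1 : ℝ), 0]

/-- The iterated cocycle `A_n(ω) = A^{(k)}(T^{n−1}ω)⋯A^{(k)}(ω)` for `n ≥ 0`,
with `A_0(ω) = Id`. -/
def AIter (k : ℝ) (ω : ℤ → ℕ) : ℕ → Matrix (Fin 2) (Fin 2) ℝ
  | 0 => 1
  | n + 1 => Acoc k (shift^[n] ω) * AIter k ω n

end

/-- We endow 2×2 real matrices with the `L²` operator norm. -/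
noncomputable instance : NormedAddCommGroup (Matrix (Fin 2) (Fin 2) ℝ) :=
  Matrix.instL2OpNormedAddCommGroup

/-- Projection onto nonnegative coordinates: `π₊ω = (ω_n)_{n≥0}`. -/
def projPlus (ω : ℤ → ℕ) : ℕ → ℕ := fun n => ω (n : ℤ)

/-- Projection onto nonpositive coordinates: `π₋ω = (ω_{−n})_{n≥0}`. -/
def projMinus (ω : ℤ → ℕ) : ℕ → ℕ := fun n => ω (-(n : ℤ))

/-- The map `P(ω) = (π₋ω, π₊ω)`; on each cylinder `[0;j]` this is the map `P_j`. -/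
def pairProj (ω : ℤ → ℕ) : (ℕ → ℕ) × (ℕ → ℕ) := (projMinus ω, projPlus ω)

/-- `μ` has a local product structure: there is a positive function `ψ` on `Ω`
(written as `ψ ∘ P` for a function on `Ω₋ × Ω₊`) such that for each letter `j`,
`ψ∘P_j⁻¹` is integrable with respect to `μ_j^− × μ_j^+` and
`(P_j)_* μ_j = (ψ∘P_j⁻¹) d(μ_j^− × μ_j^+)`. -/
def LocalProductStructure (ℓ : ℕ) (W : Set (ℕ × ℕ)) (μ : Measure (ℤ → ℕ)) : Prop :=
  ∃ ψ : (ℕ → ℕ) × (ℕ → ℕ) → ℝ,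
    (∀ ω ∈ SFT ℓ W, 0 < ψ (pairProj ω)) ∧
    ∀ j : ℕ, 1 ≤ j → j ≤ ℓ →
      MeasureTheory.Integrable ψ
        (((Measure.map projMinus μ).restrict {a | a 0 = j}).prod
          ((Measure.map projPlus μ).restrict {a | a 0 = j})) ∧
      Measure.map pairProj (μ.restrict {ω | ω 0 = j}) =
        (((Measure.map projMinus μ).restrict {a | a 0 = j}).prod
          ((Measure.map projPlus μ).restrict {a | a 0 = j})).withDensity
          (fun x => ENNReal.ofReal (ψ x))

/-- `supp μ = Ω`: every open set meeting `Ω` has positive measure. -/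
def FullSupport (ℓ : ℕ) (W : Set (ℕ × ℕ)) (μ : Measure (ℤ → ℕ)) : Prop :=
  ∀ U : Set (ℤ → ℕ), IsOpen U → (U ∩ SFT ℓ W).Nonempty → 0 < μ U

/-- `ℓ²(ℤ)` over `ℝ`. -/
abbrev L2Z : Type := lp (fun _ : ℤ => ℝ) 2

/-- `H` is the periodic Jacobi-type operator `H̃_p` on `ℓ²(ℤ)`:
`(H̃_p u)(n) = (p_n/(p_n+p_{n−1}))·u(n+1) + (p_{n−1}/(p_n+p_{n−1}))·u(n−1)`. -/
def IsJacobiOp (p : ℤ → ℕ) (H : L2Z →L[ℝ] L2Z) : Prop :=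
  ∀ u : L2Z, ∀ n : ℤ,
    (H u : ∀ _ : ℤ, ℝ) n =
      ((p n : ℝ) / ((p n : ℝ) + (p (n - 1) : ℝ))) * (u : ∀ _ : ℤ, ℝ) (n + 1) +
      ((p (n - 1) : ℝ) / ((p n : ℝ) + (p (n - 1) : ℝ))) * (u : ∀ _ : ℤ, ℝ) (n - 1)

/-!
When the Lyapunov exponent vanishes, an entropy bound shows that the averages of a measure on the
plane along the past of the transfer cocycle asymptotically decorrelate from the martingale
increments of the future filtration. Their weak limits are thus functions of the past alone and of
the future alone, and the local product structure makes such functions constant on one-letter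
cylinders. This yields a family of means on the plane, indexed by the letters, which is equivariant
under the transfer matrix of every transition of positive probability.

At a fixed letter the transfer matrix is elliptic for `|E| < 1`, and its invariant quadratic form
determines the second moments of an invariant mean. Transfer matrices along loops at that letter
must therefore preserve the form, first for infinitely many energies and then, the condition being
polynomial in `E`, for all of them. So for `|E| < 1` the transfer matrices along any point of the
subshift stay bounded, the solutions are bounded above and away from zero, and truncating them puts
`E` in the spectrum. Conversely, Jensen's inequality makes `H̃_p` a contraction for an equivalent
weighted `ℓ²` norm.
-/

section Entropy

/-- The Bregman divergence of `x ↦ x log x`, the pointwise density of relative entropy. -/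
noncomputable def relEntropyFun (p q : ℝ) : ℝ := p * log p - p * log q - p + q

lemma sq_sqrt_sub_sqrt_le_relEntropyFun {p q : ℝ} (hp : 0 < p) (hq : 0 < q) :
    (√p - √q) ^ 2 ≤ relEntropyFun p q := by
  have hlog : log (√q / √p) ≤ √q / √p - 1 := log_le_sub_one_of_pos (by positivity)
  rw [log_div (by positivity) (by positivity), log_sqrt hq.le, log_sqrt hp.le] at hlog
  have hmul : p * (√q / √p - 1) = √p * √q - p := by
    nth_rw 1 [← sq_sqrt hp.le]
    nth_rw 4 [← sq_sqrt hp.le]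
    field_simp
  have := mul_le_mul_of_nonneg_left hlog hp.le
  rw [relEntropyFun, sub_sq, sq_sqrt hp.le, sq_sqrt hq.le]
  linarith

lemma relEntropyFun_nonneg {p q : ℝ} (hp : 0 < p) (hq : 0 < q) : 0 ≤ relEntropyFun p q :=
  (sq_nonneg _).trans (sq_sqrt_sub_sqrt_le_relEntropyFun hp hq)

lemma abs_sub_le_sq_sqrt_sub_sqrt {p q ε : ℝ} (hp : 0 ≤ p) (hq : 0 ≤ q) (hε : 0 < ε) :
    |p - q| ≤ 1 / (2 * ε) * (√p - √q) ^ 2 + ε * (p + q) := by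
  have hfactor : |p - q| = |√p - √q| * (√p + √q) := by
    rw [← abs_of_nonneg (add_nonneg (sqrt_nonneg p) (sqrt_nonneg q)), ← abs_mul, mul_comm,
      ← sq_sub_sq, sq_sqrt hp, sq_sqrt hq]
  have hAMGM : |√p - √q| * (√p + √q) ≤
      1 / (2 * ε) * |√p - √q| ^ 2 + ε / 2 * (√p + √q) ^ 2 := by
    have hsq : 1 / (2 * ε) * |√p - √q| ^ 2 + ε / 2 * (√p + √q) ^ 2 - |√p - √q| * (√p + √q)
        = 1 / (2 * ε) * (|√p - √q| - ε * (√p + √q)) ^ 2 := by field_simp; ring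
    have : 0 ≤ 1 / (2 * ε) * (|√p - √q| - ε * (√p + √q)) ^ 2 := by positivity
    linarith
  have := mul_nonneg hε.le (sq_nonneg (√p - √q))
  rw [hfactor, ← sq_abs (√p - √q)]
  nlinarith [sq_sqrt hp, sq_sqrt hq]

lemma abs_sub_le_relEntropyFun {p q ε : ℝ} (hp : 0 < p) (hq : 0 < q) (hε : 0 < ε) :
    |p - q| ≤ 1 / (2 * ε) * relEntropyFun p q + ε * (p + q) := by
  have := sq_sqrt_sub_sqrt_le_relEntropyFun hp hq
  exact (abs_sub_le_sq_sqrt_sub_sqrt hp.le hq.le hε).trans (by gcongr)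

variable {Ω : Type*} {m m0 : MeasurableSpace Ω} {μ : Measure Ω}

lemma integrable_mul_log {Y Z : Ω → ℝ} {c C : ℝ} (hc : 0 < c) (hZ : Integrable Z μ)
    (hYm : AEStronglyMeasurable Y μ) (hY : ∀ᵐ ω ∂μ, Y ω ∈ Icc c C) :
    Integrable (fun ω => Z ω * log (Y ω)) μ := by
  refine hZ.mul_bdd (c := max |log c| |log C|)
    (measurable_log.comp_aemeasurable hYm.aemeasurable).aestronglyMeasurable ?_
  filter_upwards [hY] with ω h
  exact abs_le_max_abs_abs (log_le_log hc h.1) (log_le_log (hc.trans_le h.1) h.2)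

lemma integrable_relEntropyFun {Y Z : Ω → ℝ} {c C : ℝ} (hc : 0 < c) (hYi : Integrable Y μ)
    (hY : ∀ᵐ ω ∂μ, Y ω ∈ Icc c C) (hZi : Integrable Z μ) (hZ : ∀ᵐ ω ∂μ, Z ω ∈ Icc c C) :
    Integrable (fun ω => relEntropyFun (Y ω) (Z ω)) μ :=
  (((integrable_mul_log hc hYi hYi.1 hY).sub (integrable_mul_log hc hYi hZi.1 hZ)).sub hYi).add hZi

variable [IsFiniteMeasure μ]

lemma condExp_mem_Icc (hm : m ≤ m0) {Y : Ω → ℝ} {c C : ℝ} (hYi : Integrable Y μ)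
    (hY : ∀ᵐ ω ∂μ, Y ω ∈ Icc c C) : ∀ᵐ ω ∂μ, (μ[Y | m]) ω ∈ Icc c C :=
  (convex_Icc c C).condExp_mem hm hYi isClosed_Icc hY

lemma integral_mul_condExp (hm : m ≤ m0) {Y Z : Ω → ℝ}
    (hZm : AEStronglyMeasurable[m] Z μ) (hZY : Integrable (fun ω => Z ω * Y ω) μ)
    (hYi : Integrable Y μ) :
    ∫ ω, Z ω * (μ[Y | m]) ω ∂μ = ∫ ω, Z ω * Y ω ∂μ := by
  rw [← integral_condExp hm (f := fun ω => Z ω * Y ω)]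
  exact (integral_congr_ae (condExp_mul_of_aestronglyMeasurable_left hZm hZY hYi)).symm

lemma integral_relEntropyFun_condExp (hm : m ≤ m0) {Y : Ω → ℝ} {c C : ℝ} (hc : 0 < c)
    (hYi : Integrable Y μ) (hY : ∀ᵐ ω ∂μ, Y ω ∈ Icc c C) :
    ∫ ω, relEntropyFun (Y ω) ((μ[Y | m]) ω) ∂μ =
      ∫ ω, Y ω * log (Y ω) ∂μ - ∫ ω, (μ[Y | m]) ω * log ((μ[Y | m]) ω) ∂μ := by
  have hcond := condExp_mem_Icc hm hYi hY
  have hYlogY := integrable_mul_log hc hYi hYi.1 hY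
  have hYlog := integrable_mul_log hc hYi integrable_condExp.1 hcond
  have hpull : ∫ ω, Y ω * log ((μ[Y | m]) ω) ∂μ = ∫ ω, (μ[Y | m]) ω * log ((μ[Y | m]) ω) ∂μ := by
    have hlogm : StronglyMeasurable[m] fun ω => log ((μ[Y | m]) ω) :=
      (measurable_log.comp stronglyMeasurable_condExp.measurable).stronglyMeasurable
    simp only [mul_comm _ (log _)] at hYlog ⊢
    exact (integral_mul_condExp hm hlogm.aestronglyMeasurable hYlog hYi).symm
  have hdiff : Integrable (fun ω => Y ω * log (Y ω) - Y ω * log ((μ[Y | m]) ω)) μ :=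
    hYlogY.sub hYlog
  have hdiff' : Integrable (fun ω => Y ω * log (Y ω) - Y ω * log ((μ[Y | m]) ω) - Y ω) μ :=
    hdiff.sub hYi
  simp only [relEntropyFun]
  rw [integral_add hdiff' integrable_condExp, integral_sub hdiff hYi,
    integral_sub hYlogY hYlog, hpull, integral_condExp hm]
  ring

lemma integral_condExp_mul_log_le (hm : m ≤ m0) {Y : Ω → ℝ} {c C : ℝ} (hc : 0 < c)
    (hYi : Integrable Y μ) (hY : ∀ᵐ ω ∂μ, Y ω ∈ Icc c C) :
    ∫ ω, (μ[Y | m]) ω * log ((μ[Y | m]) ω) ∂μ ≤ ∫ ω, Y ω * log (Y ω) ∂μ := by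
  rw [← sub_nonneg, ← integral_relEntropyFun_condExp hm hc hYi hY]
  refine integral_nonneg_of_ae ?_
  filter_upwards [hY, condExp_mem_Icc hm hYi hY] with ω hYω hcondω
  exact relEntropyFun_nonneg (hc.trans_le hYω.1) (hc.trans_le hcondω.1)

lemma integral_abs_sub_condExp_le (hm : m ≤ m0) {Y : Ω → ℝ} {c C ε : ℝ} (hc : 0 < c) (hε : 0 < ε)
    (hYi : Integrable Y μ) (hY : ∀ᵐ ω ∂μ, Y ω ∈ Icc c C) :
    ∫ ω, |Y ω - (μ[Y | m]) ω| ∂μ ≤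
      1 / (2 * ε) * (∫ ω, Y ω * log (Y ω) ∂μ - ∫ ω, (μ[Y | m]) ω * log ((μ[Y | m]) ω) ∂μ)
        + 2 * ε * ∫ ω, Y ω ∂μ := by
  have hcond := condExp_mem_Icc hm hYi hY
  have hent := integrable_relEntropyFun hc hYi hY (integrable_condExp (m := m) (f := Y)) hcond
  have hsum : Integrable (fun ω => Y ω + (μ[Y | m]) ω) μ := hYi.add integrable_condExp
  calc ∫ ω, |Y ω - (μ[Y | m]) ω| ∂μ
      ≤ ∫ ω, (1 / (2 * ε) * relEntropyFun (Y ω) ((μ[Y | m]) ω) + ε * (Y ω + (μ[Y | m]) ω)) ∂μ := by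
        refine integral_mono_ae (hYi.sub integrable_condExp).abs
          ((hent.const_mul _).add (hsum.const_mul _)) ?_
        filter_upwards [hY, hcond] with ω hYω hcondω
        exact abs_sub_le_relEntropyFun (hc.trans_le hYω.1) (hc.trans_le hcondω.1) hε
    _ = _ := by
        rw [integral_add (hent.const_mul _) (hsum.const_mul _), integral_const_mul,
          integral_relEntropyFun_condExp hm hc hYi hY, integral_const_mul,
          integral_add hYi integrable_condExp, integral_condExp hm]
        ring

lemma integral_sub_measure_univ_le_integral_mul_log {Y : Ω → ℝ} {c C : ℝ} (hc : 0 < c)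
    (hYi : Integrable Y μ) (hY : ∀ᵐ ω ∂μ, Y ω ∈ Icc c C) :
    ∫ ω, Y ω ∂μ - μ.real univ ≤ ∫ ω, Y ω * log (Y ω) ∂μ := by
  have hconst : μ.real univ = ∫ _, (1 : ℝ) ∂μ := by simp
  rw [hconst, ← integral_sub hYi (integrable_const _)]
  refine integral_mono_ae (hYi.sub (integrable_const _)) (integrable_mul_log hc hYi hYi.1 hY) ?_
  filter_upwards [hY] with ω h
  have := relEntropyFun_nonneg (hc.trans_le h.1) one_pos
  simp only [relEntropyFun, log_one] at this
  linarith

variable {G : ℕ → MeasurableSpace Ω} {Y : Ω → ℝ} {c C ε : ℝ}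

lemma integral_abs_condExp_succ_sub_le (hGm : ∀ q, G q ≤ m0) (hG : Monotone G) (hc : 0 < c)
    (hε : 0 < ε) (hYi : Integrable Y μ) (hY : ∀ᵐ ω ∂μ, Y ω ∈ Icc c C) (q : ℕ) :
    ∫ ω, |(μ[Y | G (q + 1)]) ω - (μ[Y | G q]) ω| ∂μ ≤
      1 / (2 * ε) * (∫ ω, (μ[Y | G (q + 1)]) ω * log ((μ[Y | G (q + 1)]) ω) ∂μ
        - ∫ ω, (μ[Y | G q]) ω * log ((μ[Y | G q]) ω) ∂μ) + 2 * ε * ∫ ω, Y ω ∂μ := by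
  have tower : μ[μ[Y|G (q + 1)] | G q] =ᵐ[μ] μ[Y | G q] :=
    condExp_condExp_of_le (hG q.le_succ) (hGm _)
  have h := integral_abs_sub_condExp_le (hGm q) hc hε
    (integrable_condExp (μ := μ) (m := G (q + 1)) (f := Y)) (condExp_mem_Icc (hGm _) hYi hY)
  have hincr : ∫ ω, |(μ[Y | G (q + 1)]) ω - (μ[μ[Y|G (q + 1)] | G q]) ω| ∂μ =
      ∫ ω, |(μ[Y | G (q + 1)]) ω - (μ[Y | G q]) ω| ∂μ :=
    integral_congr_ae (tower.mono fun ω h => by simp only [h])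
  have hent : ∫ ω, (μ[μ[Y|G (q + 1)] | G q]) ω * log ((μ[μ[Y|G (q + 1)] | G q]) ω) ∂μ =
      ∫ ω, (μ[Y | G q]) ω * log ((μ[Y | G q]) ω) ∂μ :=
    integral_congr_ae (tower.mono fun ω h => by simp only [h])
  rwa [hincr, hent, integral_condExp (hGm _)] at h

/-- The entropies of `μ[Y | G q]` telescope. -/
lemma sum_integral_abs_condExp_sub_le (hGm : ∀ q, G q ≤ m0) (hG : Monotone G) (hc : 0 < c)
    (hε : 0 < ε) (hYi : Integrable Y μ) (hY : ∀ᵐ ω ∂μ, Y ω ∈ Icc c C) (N : ℕ) :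
    ∑ q ∈ Finset.range N, ∫ ω, |(μ[Y | G (q + 1)]) ω - (μ[Y | G q]) ω| ∂μ ≤
      1 / (2 * ε) * (∫ ω, Y ω * log (Y ω) ∂μ - ∫ ω, Y ω ∂μ + μ.real univ)
        + 2 * ε * N * ∫ ω, Y ω ∂μ := by
  set ent : ℕ → ℝ := fun q => ∫ ω, (μ[Y | G q]) ω * log ((μ[Y | G q]) ω) ∂μ
  have hlast : ent N ≤ ∫ ω, Y ω * log (Y ω) ∂μ := integral_condExp_mul_log_le (hGm N) hc hYi hY
  have hfirst : ∫ ω, Y ω ∂μ - μ.real univ ≤ ent 0 := by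
    rw [← integral_condExp (hGm 0)]
    exact integral_sub_measure_univ_le_integral_mul_log hc integrable_condExp
      (condExp_mem_Icc (hGm 0) hYi hY)
  calc _ ≤ ∑ q ∈ Finset.range N, (1 / (2 * ε) * (ent (q + 1) - ent q) + 2 * ε * ∫ ω, Y ω ∂μ) :=
        Finset.sum_le_sum fun q _ => integral_abs_condExp_succ_sub_le hGm hG hc hε hYi hY q
    _ = 1 / (2 * ε) * (ent N - ent 0) + 2 * ε * N * ∫ ω, Y ω ∂μ := by
        rw [Finset.sum_add_distrib, ← Finset.mul_sum, Finset.sum_range_sub, Finset.sum_const,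
          Finset.card_range, nsmul_eq_mul]
        ring
    _ ≤ _ := by gcongr; linarith

end Entropy

section Increments

variable {Ω : Type*} {G₀ G₁ m0 : MeasurableSpace Ω} {μ : Measure Ω}

/-- Only the martingale increment of `Y` between `G₀` and `G₁` is seen by `W`. -/
lemma abs_integral_mul_le_of_condExp_eq_zero [IsFiniteMeasure μ] (h0 : G₀ ≤ m0) (h1 : G₁ ≤ m0)
    {W Y : Ω → ℝ} {B : ℝ} (hWm : StronglyMeasurable[G₁] W)
    (hWB : ∀ᵐ ω ∂μ, |W ω| ≤ B) (hW : μ[W | G₀] =ᵐ[μ] 0) (hY : Integrable Y μ) :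
    |∫ ω, W ω * Y ω ∂μ| ≤ B * ∫ ω, |(μ[Y | G₁]) ω - (μ[Y | G₀]) ω| ∂μ := by
  have hWm' : AEStronglyMeasurable W μ := (hWm.mono h1).aestronglyMeasurable
  have hmul {Z : Ω → ℝ} (hZ : Integrable Z μ) : Integrable (fun ω => W ω * Z ω) μ :=
    hZ.bdd_mul hWm' hWB
  have hWi : Integrable W μ := (integrable_const B).mono' hWm' hWB
  have hG₁ : ∫ ω, W ω * (μ[Y | G₁]) ω ∂μ = ∫ ω, W ω * Y ω ∂μ :=
    integral_mul_condExp h1 hWm.aestronglyMeasurable (hmul hY) hY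
  have hG₀ : ∫ ω, W ω * (μ[Y | G₀]) ω ∂μ = 0 := by
    have hZW := hmul (integrable_condExp (m := G₀) (f := Y))
    simp only [mul_comm (W _)] at hZW ⊢
    rw [← integral_mul_condExp h0 stronglyMeasurable_condExp.aestronglyMeasurable hZW hWi]
    exact integral_eq_zero_of_ae (hW.mono fun ω h => by simp [h])
  have hincr : ∫ ω, W ω * Y ω ∂μ = ∫ ω, W ω * ((μ[Y | G₁]) ω - (μ[Y | G₀]) ω) ∂μ := by
    simp only [mul_sub]
    rw [integral_sub (hmul integrable_condExp) (hmul integrable_condExp), hG₁, hG₀, sub_zero]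
  have hdiff : Integrable (fun ω => (μ[Y | G₁]) ω - (μ[Y | G₀]) ω) μ :=
    integrable_condExp.sub integrable_condExp
  rw [hincr, ← integral_const_mul]
  refine abs_integral_le_integral_abs.trans
    (integral_mono_ae (hmul hdiff).abs (hdiff.abs.const_mul B) ?_)
  filter_upwards [hWB] with ω h
  rw [abs_mul]
  gcongr

variable {G : ℕ → MeasurableSpace Ω} {Y : Ω → ℝ}

lemma integral_abs_condExp_add_sub_le (r q : ℕ) :
    ∫ ω, |(μ[Y | G (q + r)]) ω - (μ[Y | G q]) ω| ∂μ ≤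
      ∑ i ∈ Finset.range r, ∫ ω, |(μ[Y | G (q + i + 1)]) ω - (μ[Y | G (q + i)]) ω| ∂μ := by
  have hdiff (i j : ℕ) : Integrable (fun ω => |(μ[Y | G i]) ω - (μ[Y | G j]) ω|) μ :=
    (integrable_condExp.sub integrable_condExp).abs
  induction r with
  | zero => simp
  | succ r ih =>
    rw [Finset.sum_range_succ]
    refine le_trans ?_ (add_le_add_left ih _)
    rw [← integral_add (hdiff _ _) (hdiff _ _)]
    refine integral_mono (hdiff _ _) ((hdiff _ _).add (hdiff _ _)) fun ω => ?_
    rw [add_comm |_|]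
    exact abs_sub_le _ _ _

lemma sum_integral_abs_condExp_add_sub_le (r n : ℕ) :
    ∑ q ∈ Finset.range n, ∫ ω, |(μ[Y | G (q + r)]) ω - (μ[Y | G q]) ω| ∂μ ≤
      r * ∑ q ∈ Finset.range (n + r), ∫ ω, |(μ[Y | G (q + 1)]) ω - (μ[Y | G q]) ω| ∂μ := by
  set d : ℕ → ℝ := fun q => ∫ ω, |(μ[Y | G (q + 1)]) ω - (μ[Y | G q]) ω| ∂μ
  have hd (q : ℕ) : 0 ≤ d q := integral_nonneg fun _ => abs_nonneg _
  calc _ ≤ ∑ q ∈ Finset.range n, ∑ i ∈ Finset.range r, d (q + i) :=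
        Finset.sum_le_sum fun q _ => integral_abs_condExp_add_sub_le r q
    _ = ∑ i ∈ Finset.range r, ∑ q ∈ Finset.range n, d (i + q) := by
        rw [Finset.sum_comm]
        simp only [add_comm]
    _ ≤ ∑ _ ∈ Finset.range r, ∑ q ∈ Finset.range (n + r), d q := by
        refine Finset.sum_le_sum fun i hi => ?_
        have hIco := Finset.sum_Ico_eq_sum_range d i (i + n)
        rw [Nat.add_sub_cancel_left] at hIco
        rw [← hIco, Finset.range_eq_Ico]
        have := Finset.mem_range.1 hi
        exact Finset.sum_le_sum_of_subset_of_nonneg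
          (Finset.Ico_subset_Ico i.zero_le (by lia)) fun q _ _ => hd q
    _ = _ := by simp

lemma sum_abs_integral_mul_le_of_condExp_eq_zero [IsFiniteMeasure μ] (hGm : ∀ q, G q ≤ m0)
    (hG : Monotone G) {W : ℕ → Ω → ℝ} {B c C ε : ℝ} {n r : ℕ} (hB : 0 ≤ B)
    (hWm : ∀ q < n, StronglyMeasurable[G (q + r)] (W q)) (hWB : ∀ q < n, ∀ᵐ ω ∂μ, |W q ω| ≤ B)
    (hW : ∀ q < n, μ[W q | G q] =ᵐ[μ] 0) (hc : 0 < c) (hε : 0 < ε) (hYi : Integrable Y μ)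
    (hY : ∀ᵐ ω ∂μ, Y ω ∈ Icc c C) :
    ∑ q ∈ Finset.range n, |∫ ω, W q ω * Y ω ∂μ| ≤
      B * (r * (1 / (2 * ε) * (∫ ω, Y ω * log (Y ω) ∂μ - ∫ ω, Y ω ∂μ + μ.real univ)
        + 2 * ε * ((n + r : ℕ) : ℝ) * ∫ ω, Y ω ∂μ)) :=
  calc _ ≤ ∑ q ∈ Finset.range n, B * ∫ ω, |(μ[Y | G (q + r)]) ω - (μ[Y | G q]) ω| ∂μ :=
        Finset.sum_le_sum fun q hq =>
          have hq := Finset.mem_range.1 hq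
          abs_integral_mul_le_of_condExp_eq_zero (hGm _) (hGm _) (hWm q hq) (hWB q hq) (hW q hq) hYi
    _ ≤ B * (r * ∑ q ∈ Finset.range (n + r),
          ∫ ω, |(μ[Y | G (q + 1)]) ω - (μ[Y | G q]) ω| ∂μ) := by
        rw [← Finset.mul_sum]
        gcongr
        exact sum_integral_abs_condExp_add_sub_le r n
    _ ≤ _ := by
        gcongr
        exact sum_integral_abs_condExp_sub_le hGm hG hc hε hYi hY _

end Increments

section ConditionalExpectation

variable {α β : Type*} {m mα : MeasurableSpace α} {m' mβ : MeasurableSpace β} {μ : Measure α}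
  {ν : Measure β}

lemma integral_comp_of_measurePreserving {T : α → β} (hT : MeasurePreserving T μ ν) {f : β → ℝ}
    (hf : AEStronglyMeasurable f ν) : ∫ a, f (T a) ∂μ = ∫ b, f b ∂ν := by
  obtain ⟨hTm, rfl⟩ := hT
  exact (integral_map hTm.aemeasurable hf).symm

variable [IsFiniteMeasure μ] [IsFiniteMeasure ν]

lemma condExp_comp_of_measurePreserving (hm : m' ≤ mβ) {T : α → β}
    (hT : MeasurePreserving T μ ν) {f : β → ℝ} (hf : Integrable f ν) :
    μ[f ∘ T | m'.comap T] =ᵐ[μ] ν[f | m'] ∘ T := by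
  have hle : m'.comap T ≤ mα := (MeasurableSpace.comap_mono hm).trans hT.measurable.comap_le
  refine (ae_eq_condExp_of_forall_setIntegral_eq hle (hT.integrable_comp_of_integrable hf)
    (fun _ _ _ => (hT.integrable_comp_of_integrable integrable_condExp).integrableOn) ?_
    (stronglyMeasurable_condExp.comp_measurable (comap_measurable T)).aestronglyMeasurable).symm
  rintro _ ⟨s, hs, rfl⟩ -
  have hTs := hT.restrict_preimage (hm s hs)
  simp only [Function.comp_apply]
  rw [integral_comp_of_measurePreserving hTs hf.1.restrict,
    integral_comp_of_measurePreserving hTs integrable_condExp.1.restrict,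
    setIntegral_condExp hm hf hs]

lemma condExp_comp_fst (hm : m ≤ mα) {f : α → ℝ} (hf : Integrable f μ) :
    (μ.prod ν)[f ∘ Prod.fst | m.prod mβ] =ᵐ[μ.prod ν] μ[f | m] ∘ Prod.fst := by
  have hle : m.prod mβ ≤ mα.prod mβ := sup_le_sup_right (MeasurableSpace.comap_mono hm) _
  have hfst {g : α → ℝ} (hg : Integrable g μ) : Integrable (g ∘ Prod.fst) (μ.prod ν) :=
    hg.comp_fst ν
  refine (ae_eq_condExp_of_forall_setIntegral_eq hle (hfst hf)
    (fun _ _ _ => (hfst integrable_condExp).integrableOn) (fun s hs _ => ?_)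
    (stronglyMeasurable_condExp.comp_measurable measurable_fst).aestronglyMeasurable).symm
  have hslice {g : α → ℝ} (hg : Integrable g μ) : ∫ z in s, (g ∘ Prod.fst) z ∂(μ.prod ν) =
      ∫ b, ∫ a in (fun a => (a, b)) ⁻¹' s, g a ∂μ ∂ν := by
    rw [← integral_indicator (hle s hs), integral_prod_symm _ ((hfst hg).indicator (hle s hs))]
    refine integral_congr_ae (.of_forall fun b => ?_)
    simp only
    rw [← integral_indicator (measurable_prodMk_right (hle s hs))]
    rfl
  rw [hslice hf, hslice integrable_condExp]
  refine integral_congr_ae (.of_forall fun b => ?_)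
  exact setIntegral_condExp hm hf ((@measurable_prodMk_right α β m mβ b) hs)

end ConditionalExpectation

open scoped MatrixGroups

section NormSL

/-- The norm of an element of `SL(2, ℝ)` is its Euclidean operator norm. -/
noncomputable instance : Norm SL(2, ℝ) := ⟨fun g => ‖(g : Matrix (Fin 2) (Fin 2) ℝ)‖⟩

lemma norm_sl_def (g : SL(2, ℝ)) : ‖g‖ = ‖(g : Matrix (Fin 2) (Fin 2) ℝ)‖ := rfl

lemma norm_sl_nonneg (g : SL(2, ℝ)) : 0 ≤ ‖g‖ := norm_nonneg (g : Matrix (Fin 2) (Fin 2) ℝ)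

lemma norm_sl_mul_le (g h : SL(2, ℝ)) : ‖g * h‖ ≤ ‖g‖ * ‖h‖ := by
  rw [norm_sl_def, Matrix.SpecialLinearGroup.coe_mul]
  exact l2_opNorm_mul _ _

open scoped Matrix.Norms.L2Operator in
lemma norm_sl_one : ‖(1 : SL(2, ℝ))‖ = 1 := by
  rw [norm_sl_def, Matrix.SpecialLinearGroup.coe_one, CStarRing.norm_one]

-- The inverse is conjugate to the transpose by the rotation `J` by a right angle.
open scoped Matrix.Norms.L2Operator in
lemma norm_sl_inv (g : SL(2, ℝ)) : ‖g⁻¹‖ = ‖g‖ := by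
  set J : Matrix (Fin 2) (Fin 2) ℝ := !![0, -1; 1, 0]
  have hJ : J ∈ unitary (Matrix (Fin 2) (Fin 2) ℝ) := by
    constructor <;> ext i j <;> fin_cases i <;> fin_cases j <;>
      simp [J, star_eq_conjTranspose, Matrix.mul_apply, Fin.sum_univ_two]
  have hinv : ((g⁻¹ : SL(2, ℝ)) : Matrix (Fin 2) (Fin 2) ℝ) =
      J * (g : Matrix (Fin 2) (Fin 2) ℝ)ᴴ * star J := by
    rw [Matrix.SpecialLinearGroup.coe_inv, adjugate_fin_two]
    ext i j
    fin_cases i <;> fin_cases j <;>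
      simp [J, star_eq_conjTranspose, Matrix.mul_apply, Fin.sum_univ_two, vecMul, dotProduct]
  rw [norm_sl_def, hinv, CStarRing.norm_mul_mem_unitary _ (Unitary.star_mem hJ),
    CStarRing.norm_mem_unitary_mul _ hJ, l2_opNorm_conjTranspose, norm_sl_def]

lemma one_le_norm_sl (g : SL(2, ℝ)) : 1 ≤ ‖g‖ := by
  have h := norm_sl_mul_le g g⁻¹
  rw [mul_inv_cancel, norm_sl_one, norm_sl_inv] at h
  nlinarith [norm_sl_nonneg g]

lemma norm_toLp_smul_le (g : SL(2, ℝ)) (x : Fin 2 → ℝ) :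
    ‖WithLp.toLp 2 (g • x)‖ ≤ ‖g‖ * ‖WithLp.toLp 2 x‖ :=
  l2_opNorm_mulVec (g : Matrix (Fin 2) (Fin 2) ℝ) (WithLp.toLp 2 x)

end NormSL

section PlaneMeasure

/-- The weight `1 + ‖x‖²` of a plane vector, for the Euclidean norm. -/
noncomputable def planeWeight (x : Fin 2 → ℝ) : ℝ := 1 + ‖WithLp.toLp 2 x‖ ^ 2

/-- A finite reference measure on the plane, with density `(1 + ‖x‖²)⁻²`. Its images under linear
maps of determinant one have densities bounded in terms of the norm of the map. -/
noncomputable def planeMeasure : Measure (Fin 2 → ℝ) :=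
  volume.withDensity fun x => ENNReal.ofReal (planeWeight x ^ 2)⁻¹

/-- The density of the image of `planeMeasure` under `g` with respect to `planeMeasure`. -/
noncomputable def relDensity (g : SL(2, ℝ)) (x : Fin 2 → ℝ) : ℝ :=
  (planeWeight x / planeWeight (g⁻¹ • x)) ^ 2

lemma one_le_planeWeight (x : Fin 2 → ℝ) : 1 ≤ planeWeight x := by
  unfold planeWeight
  linarith [sq_nonneg ‖WithLp.toLp 2 x‖]

lemma planeWeight_pos (x : Fin 2 → ℝ) : 0 < planeWeight x :=
  zero_lt_one.trans_le (one_le_planeWeight x)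

lemma measurable_planeWeight : Measurable planeWeight := by
  unfold planeWeight
  fun_prop

lemma planeWeight_smul_le (g : SL(2, ℝ)) (x : Fin 2 → ℝ) :
    planeWeight (g • x) ≤ ‖g‖ ^ 2 * planeWeight x := by
  calc planeWeight (g • x)
      ≤ 1 + (‖g‖ * ‖WithLp.toLp 2 x‖) ^ 2 := by
        unfold planeWeight
        gcongr
        exact norm_toLp_smul_le g x
    _ ≤ ‖g‖ ^ 2 * planeWeight x := by
        rw [planeWeight, mul_pow, mul_add, mul_one]
        gcongr
        exact one_le_pow₀ (one_le_norm_sl g)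

lemma relDensity_pos (g : SL(2, ℝ)) (x : Fin 2 → ℝ) : 0 < relDensity g x :=
  pow_pos (div_pos (planeWeight_pos _) (planeWeight_pos _)) 2

lemma relDensity_le (g : SL(2, ℝ)) (x : Fin 2 → ℝ) :
    relDensity g x ≤ ‖g‖ ^ 4 := by
  have h := planeWeight_smul_le g (g⁻¹ • x)
  rw [smul_inv_smul, ← div_le_iff₀ (planeWeight_pos _)] at h
  calc relDensity g x ≤ (‖g‖ ^ 2) ^ 2 :=
        pow_le_pow_left₀ (div_pos (planeWeight_pos _) (planeWeight_pos _)).le h 2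
    _ = _ := by ring

lemma inv_norm_pow_le_relDensity (g : SL(2, ℝ)) (x : Fin 2 → ℝ) :
    (‖g‖ ^ 4)⁻¹ ≤ relDensity g x := by
  have h := relDensity_le g⁻¹ (g⁻¹ • x)
  have hinv : relDensity g⁻¹ (g⁻¹ • x) = (relDensity g x)⁻¹ := by
    rw [relDensity, relDensity, inv_inv, smul_inv_smul, ← inv_pow, inv_div]
  rw [hinv, norm_sl_inv] at h
  exact inv_le_of_inv_le₀ (relDensity_pos g x) h

lemma log_relDensity_le (g : SL(2, ℝ)) (x : Fin 2 → ℝ) :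
    log (relDensity g x) ≤ 4 * log ‖g‖ := by
  have h := log_le_log (relDensity_pos g x) (relDensity_le g x)
  rwa [log_pow] at h

instance : IsFiniteMeasure planeMeasure := by
  have hE : Integrable fun x : EuclideanSpace ℝ (Fin 2) => ((1 + ‖x‖ ^ 2) ^ 2)⁻¹ := by
    refine (integrable_rpow_neg_one_add_norm_sq (r := 4) ?_).congr (.of_forall fun x => ?_)
    · simp only [finrank_euclideanSpace, Fintype.card_fin, Nat.cast_ofNat]
      norm_num
    · simp only
      rw [neg_div, rpow_neg (by positivity)]
      norm_num
  exact isFiniteMeasure_withDensity_ofReal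
    ((PiLp.volume_preserving_toLp (Fin 2)).integrable_comp_of_integrable hE).2

lemma planeMeasure_singleton_zero : planeMeasure {0} = 0 :=
  withDensity_absolutelyContinuous _ _ (measure_singleton _)

lemma measurable_ofReal_inv_planeWeight_sq :
    Measurable fun x => ENNReal.ofReal (planeWeight x ^ 2)⁻¹ :=
  (measurable_planeWeight.pow_const 2).inv.ennreal_ofReal

lemma measureReal_planeMeasure_univ_pos : 0 < planeMeasure.real univ := by
  have hac : (volume : Measure (Fin 2 → ℝ)) ≪ planeMeasure := by
    refine withDensity_absolutelyContinuous' measurable_ofReal_inv_planeWeight_sq.aemeasurable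
      (.of_forall fun x => ?_)
    have := planeWeight_pos x
    exact (ENNReal.ofReal_pos.2 (by positivity)).ne'
  refine ENNReal.toReal_pos (fun h => ?_) (measure_ne_top _ _)
  exact NeZero.ne (volume (univ : Set (Fin 2 → ℝ))) (hac h)

lemma integral_planeMeasure (f : (Fin 2 → ℝ) → ℝ) :
    ∫ x, f x ∂planeMeasure = ∫ x, (planeWeight x ^ 2)⁻¹ * f x := by
  rw [planeMeasure, integral_withDensity_eq_integral_toReal_smul
    measurable_ofReal_inv_planeWeight_sq (.of_forall fun _ => ENNReal.ofReal_lt_top)]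
  refine integral_congr_ae (.of_forall fun x => ?_)
  simp only [smul_eq_mul]
  rw [ENNReal.toReal_ofReal (inv_nonneg.2 (sq_nonneg _))]

lemma measurePreserving_smul_volume (g : SL(2, ℝ)) :
    MeasurePreserving (fun x : Fin 2 → ℝ => g • x) volume volume := by
  have h := Real.map_matrix_volume_pi_eq_smul_volume_pi (M := (g : Matrix (Fin 2) (Fin 2) ℝ))
    (by simp)
  rw [Matrix.SpecialLinearGroup.det_coe, inv_one, abs_one, ENNReal.ofReal_one, one_smul] at h
  exact ⟨(toLin' (g : Matrix (Fin 2) (Fin 2) ℝ)).continuous_of_finiteDimensional.measurable, h⟩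

lemma integral_smul_planeMeasure (g : SL(2, ℝ)) (f : (Fin 2 → ℝ) → ℝ) :
    ∫ x, f (g • x) ∂planeMeasure = ∫ x, f x * relDensity g x ∂planeMeasure := by
  have hemb : MeasurableEmbedding fun x : Fin 2 → ℝ => g • x :=
    (MeasurableEquiv.mk (MulAction.toPerm g) (measurePreserving_smul_volume g).measurable
      (measurePreserving_smul_volume g⁻¹).measurable).measurableEmbedding
  rw [integral_planeMeasure, integral_planeMeasure,
    ← (measurePreserving_smul_volume g).integral_comp hemb
      fun x => (planeWeight x ^ 2)⁻¹ * (f x * relDensity g x)]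
  refine integral_congr_ae (.of_forall fun x => ?_)
  have := planeWeight_pos x
  have := planeWeight_pos (g • x)
  simp only [relDensity, inv_smul_smul]
  field_simp

lemma integral_relDensity (g : SL(2, ℝ)) :
    ∫ x, relDensity g x ∂planeMeasure = planeMeasure.real univ := by
  have h := integral_smul_planeMeasure g fun _ => 1
  simpa only [one_mul, integral_const, smul_eq_mul, mul_one] using h.symm

end PlaneMeasure

section MeasurableFamilies

variable {α : Type*} {mα : MeasurableSpace α} {P : α → SL(2, ℝ)} {x : α → Fin 2 → ℝ}

-- The discrete σ-algebra on the group is harmless: only countably many products of letters occur.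
lemma measurable_smul_of_measurable_top (hP : Measurable[mα, ⊤] P) (hx : Measurable x) :
    Measurable fun a => P a • x a := by
  have hij : ∀ i j, Measurable fun a => (P a : Matrix (Fin 2) (Fin 2) ℝ) i j := fun i j =>
    (@measurable_from_top _ _ _ fun g : SL(2, ℝ) => (g : Matrix (Fin 2) (Fin 2) ℝ) i j).comp hP
  refine measurable_pi_lambda _ fun i => ?_
  simp only [Matrix.SpecialLinearGroup.smul_def, smul_eq_mulVec, mulVec, dotProduct,
    Fin.sum_univ_two]
  have hxj := fun j => (measurable_pi_apply j).comp hx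
  exact ((hij i 0).mul (hxj 0)).add ((hij i 1).mul (hxj 1))

lemma measurable_inv_smul_of_measurable_top (hP : Measurable[mα, ⊤] P) (hx : Measurable x) :
    Measurable fun a => (P a)⁻¹ • x a :=
  measurable_smul_of_measurable_top ((@measurable_from_top _ _ ⊤ (·⁻¹)).comp hP) hx

lemma measurable_relDensity_of_measurable_top (hP : Measurable[mα, ⊤] P) (hx : Measurable x) :
    Measurable fun a => relDensity (P a) (x a) :=
  ((measurable_planeWeight.comp hx).div (measurable_planeWeight.comp
    (measurable_inv_smul_of_measurable_top hP hx))).pow_const 2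

end MeasurableFamilies

section PathProd

variable {G : Type*} [Monoid G] {M : ℕ → ℕ → G}

/-- The product of the elements `M (ω i) (ω (i+1))` along the word `ω s, …, ω (s+n)`, later
factors standing to the left. -/
def pathProd (M : ℕ → ℕ → G) (ω : ℤ → ℕ) (s : ℤ) : ℕ → G
  | 0 => 1
  | n + 1 => M (ω (s + n)) (ω (s + n + 1)) * pathProd M ω s n

/-- The σ-algebra generated by the coordinates `ω u`, `u ≥ s`. -/
@[reducible] def futureAlg (s : ℤ) : MeasurableSpace (ℤ → ℕ) :=
  MeasurableSpace.comap (fun ω (i : ℕ) => ω (s + i)) inferInstance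

lemma shift_iterate_apply (t : ℕ) (ω : ℤ → ℕ) (u : ℤ) : (shift^[t] ω) u = ω (u + t) := by
  induction t generalizing ω with
  | zero => simp
  | succ t ih =>
    rw [Function.iterate_succ_apply, ih, shift]
    push_cast
    congr 1
    ring

lemma pathProd_shift_iterate (t : ℕ) (ω : ℤ → ℕ) (s : ℤ) (n : ℕ) :
    pathProd M (shift^[t] ω) s n = pathProd M ω (s + t) n := by
  induction n with
  | zero => rfl
  | succ n ih =>
    rw [pathProd, pathProd, ih, shift_iterate_apply, shift_iterate_apply]
    congr 3 <;> ring

lemma pathProd_add (ω : ℤ → ℕ) (s : ℤ) (m n : ℕ) :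
    pathProd M ω s (m + n) = pathProd M ω (s + m) n * pathProd M ω s m := by
  induction n with
  | zero => simp [pathProd]
  | succ n ih =>
    rw [← add_assoc, pathProd, ih, pathProd, mul_assoc]
    push_cast
    simp only [add_assoc]

lemma norm_pathProd_le {M : ℕ → ℕ → SL(2, ℝ)} {F : ℝ}
    (hF : ∀ a b, ‖M a b‖ ≤ F) (ω : ℤ → ℕ) (s : ℤ) (n : ℕ) :
    ‖pathProd M ω s n‖ ≤ F ^ n := by
  induction n with
  | zero =>
    rw [pathProd, norm_sl_one, pow_zero]
  | succ n ih =>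
    have hF0 : 0 ≤ F := zero_le_one.trans ((one_le_norm_sl _).trans (hF 0 0))
    rw [pathProd, pow_succ']
    exact (norm_sl_mul_le _ _).trans
      (mul_le_mul (hF _ _) ih (zero_le_one.trans (one_le_norm_sl _)) hF0)

lemma measurable_coord_futureAlg {s u : ℤ} (h : s ≤ u) :
    Measurable[futureAlg s] (fun ω : ℤ → ℕ => ω u) := by
  have h2 := (measurable_pi_apply (X := fun _ : ℕ => ℕ) (u - s).toNat).comp
    (comap_measurable fun (ω : ℤ → ℕ) (i : ℕ) => ω (s + i))
  rwa [show (fun ω : ℤ → ℕ => ω u) = fun ω => ω (s + (u - s).toNat) by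
    rw [Int.toNat_of_nonneg (by omega), add_sub_cancel]]

lemma futureAlg_le (s : ℤ) : futureAlg s ≤ (inferInstance : MeasurableSpace (ℤ → ℕ)) :=
  (measurable_pi_lambda _ fun _ => measurable_pi_apply _).comap_le

lemma futureAlg_anti : Antitone futureAlg := fun s s' h =>
  (@measurable_pi_lambda _ _ _ (futureAlg s) _ (fun (ω : ℤ → ℕ) (i : ℕ) => ω (s' + i))
    fun i => measurable_coord_futureAlg (by omega)).comap_le

lemma comap_shift_iterate_futureAlg (s : ℤ) (t : ℕ) :
    (futureAlg s).comap shift^[t] = futureAlg (s + t) := by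
  rw [futureAlg, MeasurableSpace.comap_comp, futureAlg]
  congr 1
  ext ω i
  simp only [Function.comp_apply, shift_iterate_apply]
  congr 1
  ring

lemma measurable_pathProd_of_measurable_coord {m : MeasurableSpace (ℤ → ℕ)} {s : ℤ} {n : ℕ}
    (hm : ∀ u, s ≤ u → u ≤ s + n → Measurable[m] (fun ω : ℤ → ℕ => ω u)) :
    Measurable[m, ⊤] (fun ω => pathProd M ω s n) := by
  induction n with
  | zero => exact measurable_const
  | succ n ih =>
    let _ : MeasurableSpace G := ⊤
    have hmul : Measurable fun z : (ℕ × ℕ) × G => M z.1.1 z.1.2 * z.2 :=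
      measurable_from_prod_countable_right fun _ => measurable_from_top
    exact hmul.comp (((hm _ (by omega) (by omega)).prodMk (hm _ (by omega) (by omega))).prodMk
      (ih fun u h1 h2 => hm u h1 (by omega)))

lemma measurable_pathProd (s : ℤ) (n : ℕ) :
    Measurable[inferInstance, ⊤] (fun ω : ℤ → ℕ => pathProd M ω s n) :=
  measurable_pathProd_of_measurable_coord fun u _ _ => measurable_pi_apply u

lemma measurable_pathProd_futureAlg {s s' : ℤ} (h : s' ≤ s) (n : ℕ) :
    Measurable[futureAlg s', ⊤] (fun ω : ℤ → ℕ => pathProd M ω s n) :=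
  measurable_pathProd_of_measurable_coord fun _ hu _ => measurable_coord_futureAlg (h.trans hu)

end PathProd

section Correlation

variable {M : ℕ → ℕ → SL(2, ℝ)} {μ : Measure (ℤ → ℕ)} [IsProbabilityMeasure μ]
  {ξ : (ℤ → ℕ) → ℝ} {φ : (Fin 2 → ℝ) → ℝ} {F K D ε : ℝ}

lemma prod_futureAlg_le {β : Type*} {mβ : MeasurableSpace β} (s : ℤ) :
    (futureAlg s).prod mβ ≤ (inferInstance : MeasurableSpace ((ℤ → ℕ) × β)) :=
  sup_le_sup_right (MeasurableSpace.comap_mono (futureAlg_le s)) _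

lemma prod_futureAlg_anti {β : Type*} {mβ : MeasurableSpace β} {s s' : ℤ} (h : s ≤ s') :
    (futureAlg s').prod mβ ≤ (futureAlg s).prod mβ :=
  sup_le_sup_right (MeasurableSpace.comap_mono (futureAlg_anti h)) _

lemma condExp_comp_shift_fst_mul_eq_zero {β : Type*} [MeasurableSpace β] {ν : Measure β}
    [IsFiniteMeasure ν] (hμ : MeasurePreserving shift μ μ) (hξ : Integrable ξ μ)
    (hξ0 : μ[ξ | futureAlg 0] =ᵐ[μ] 0) (t : ℕ) {h : (ℤ → ℕ) × β → ℝ}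
    (hh : Measurable[(futureAlg t).prod inferInstance] h) (hD : ∀ z, |h z| ≤ D) :
    (μ.prod ν)[fun z => ξ (shift^[t] z.1) * h z | (futureAlg t).prod inferInstance]
      =ᵐ[μ.prod ν] 0 := by
  have hT := hμ.iterate t
  have hξT : Integrable (ξ ∘ shift^[t]) μ := hT.integrable_comp_of_integrable hξ
  have hi : Integrable (fun z : (ℤ → ℕ) × β => ξ (shift^[t] z.1)) (μ.prod ν) := hξT.comp_fst ν
  have hcond : μ[ξ ∘ shift^[t] | futureAlg t] =ᵐ[μ] 0 := by
    have h := condExp_comp_of_measurePreserving (futureAlg_le 0) hT hξ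
    rw [comap_shift_iterate_futureAlg, zero_add] at h
    exact h.trans (hT.quasiMeasurePreserving.ae_eq_comp hξ0)
  have hprod := condExp_comp_fst (ν := ν) (futureAlg_le t) hξT
  filter_upwards [condExp_mul_of_stronglyMeasurable_right hh.stronglyMeasurable
    (hi.mul_bdd (hh.mono (prod_futureAlg_le t) le_rfl).aestronglyMeasurable (.of_forall hD)) hi,
    hprod,
    Measure.quasiMeasurePreserving_fst.ae_eq_comp hcond] with z hz hzp hz0
  have hz' := hzp.trans hz0
  exact hz.trans (mul_eq_zero_of_left hz' _)

lemma measurable_relDensity_pathProd (s : ℤ) (n : ℕ) :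
    Measurable fun z : (ℤ → ℕ) × (Fin 2 → ℝ) => relDensity (pathProd M z.1 s n) z.2 :=
  measurable_relDensity_of_measurable_top
    (@Measurable.comp _ _ _ _ _ ⊤ _ _ (measurable_pathProd s n) measurable_fst) measurable_snd

lemma relDensity_pathProd_mem_Icc (hF : ∀ a b, ‖M a b‖ ≤ F) (ω : ℤ → ℕ) (s : ℤ) (n : ℕ)
    (x : Fin 2 → ℝ) :
    relDensity (pathProd M ω s n) x ∈ Icc (((F ^ n) ^ 4)⁻¹) ((F ^ n) ^ 4) := by
  have h1 := one_le_norm_sl (pathProd M ω s n)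
  have h4 : ‖pathProd M ω s n‖ ^ 4 ≤ (F ^ n) ^ 4 :=
    pow_le_pow_left₀ (by linarith) (norm_pathProd_le hF ω s n) 4
  exact ⟨(inv_anti₀ (by positivity) h4).trans (inv_norm_pow_le_relDensity _ _),
    (relDensity_le _ _).trans h4⟩

lemma integrable_relDensity_pathProd (hF : ∀ a b, ‖M a b‖ ≤ F) (s : ℤ) (n : ℕ) :
    Integrable (fun z : (ℤ → ℕ) × (Fin 2 → ℝ) => relDensity (pathProd M z.1 s n) z.2)
      (μ.prod planeMeasure) :=
  .of_bound (measurable_relDensity_pathProd s n).aestronglyMeasurable ((F ^ n) ^ 4)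
    (.of_forall fun z => by
      rw [norm_of_nonneg (relDensity_pos _ _).le]
      exact (relDensity_pathProd_mem_Icc hF z.1 s n z.2).2)

lemma integral_relDensity_pathProd (hF : ∀ a b, ‖M a b‖ ≤ F) (s : ℤ) (n : ℕ) :
    ∫ z, relDensity (pathProd M z.1 s n) z.2 ∂(μ.prod planeMeasure) =
      planeMeasure.real univ := by
  rw [integral_prod _ (integrable_relDensity_pathProd hF s n)]
  simp only [integral_relDensity, integral_const, probReal_univ, one_smul]

lemma integrable_log_norm_pathProd (hF : ∀ a b, ‖M a b‖ ≤ F) (s : ℤ) (n : ℕ) :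
    Integrable (fun ω => log ‖pathProd M ω s n‖) μ := by
  have hm : Measurable fun ω => log ‖pathProd M ω s n‖ :=
    (@measurable_from_top _ _ _ fun g : SL(2, ℝ) => log ‖g‖).comp (measurable_pathProd s n)
  refine .of_bound hm.aestronglyMeasurable (log (F ^ n)) (.of_forall fun ω => ?_)
  have h1 := one_le_norm_sl (pathProd M ω s n)
  rw [norm_of_nonneg (log_nonneg h1)]
  exact log_le_log (by linarith) (norm_pathProd_le hF ω s n)

lemma integral_relDensity_pathProd_mul_log_le (hF : ∀ a b, ‖M a b‖ ≤ F) (s : ℤ) (n : ℕ) :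
    ∫ z, relDensity (pathProd M z.1 s n) z.2 * log (relDensity (pathProd M z.1 s n) z.2)
        ∂(μ.prod planeMeasure) ≤
      planeMeasure.real univ * (4 * ∫ ω, log ‖pathProd M ω s n‖ ∂μ) := by
  have hF0 : 0 < F := zero_lt_one.trans_le ((one_le_norm_sl _).trans (hF 0 0))
  have hYi := integrable_relDensity_pathProd (μ := μ) hF s n
  have hlog := integrable_log_norm_pathProd (μ := μ) hF s n
  have hYlog : Integrable (fun z : (ℤ → ℕ) × (Fin 2 → ℝ) =>
      relDensity (pathProd M z.1 s n) z.2 * (4 * log ‖pathProd M z.1 s n‖))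
      (μ.prod planeMeasure) :=
    ((hlog.const_mul 4).comp_fst _).bdd_mul hYi.1 (.of_forall fun z => by
      rw [norm_of_nonneg (relDensity_pos _ _).le]
      exact (relDensity_pathProd_mem_Icc hF z.1 s n z.2).2)
  calc _ ≤ ∫ z, relDensity (pathProd M z.1 s n) z.2 * (4 * log ‖pathProd M z.1 s n‖)
        ∂(μ.prod planeMeasure) :=
        integral_mono (integrable_mul_log (by positivity) hYi hYi.1
          (.of_forall fun z => relDensity_pathProd_mem_Icc hF z.1 s n z.2)) hYlog fun z =>
          mul_le_mul_of_nonneg_left (log_relDensity_le _ _) (relDensity_pos _ _).le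
    _ = _ := by
        rw [integral_prod _ hYlog]
        simp only [integral_mul_const, integral_relDensity, integral_const_mul]

lemma measurable_comp_inv_pathProd_smul (hφ : Measurable φ) (s : ℤ) (n : ℕ) :
    Measurable[(futureAlg s).prod inferInstance] fun z : (ℤ → ℕ) × (Fin 2 → ℝ) =>
      φ ((pathProd M z.1 s n)⁻¹ • z.2) :=
  hφ.comp (@measurable_inv_smul_of_measurable_top _ ((futureAlg s).prod inferInstance) _ _
    (@Measurable.comp _ _ _ _ (futureAlg s) ⊤ _ _ (measurable_pathProd_futureAlg le_rfl n)
      (@measurable_fst _ _ (futureAlg s) _)) (@measurable_snd _ _ (futureAlg s) _))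

lemma stronglyMeasurable_comp_shift_iterate {r : ℕ} (hξ : StronglyMeasurable[futureAlg (-r)] ξ)
    {t : ℕ} {s : ℤ} (hs : s ≤ t - r) : StronglyMeasurable[futureAlg s] (ξ ∘ shift^[t]) := by
  have h := hξ.comp_measurable (comap_measurable shift^[t])
  rw [comap_shift_iterate_futureAlg] at h
  exact h.mono (futureAlg_anti (by omega))

-- The σ-algebras `futureAlg t` decrease with `t`, so the sum is reversed to obtain a filtration.
lemma sum_abs_integral_comp_shift_mul_relDensity_le (hμ : MeasurePreserving shift μ μ)
    (hF : ∀ a b, ‖M a b‖ ≤ F) (hφ : Measurable φ) (hD : ∀ x, |φ x| ≤ D) {r : ℕ}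
    (hξ : StronglyMeasurable[futureAlg (-r)] ξ) (hK : ∀ᵐ ω ∂μ, |ξ ω| ≤ K)
    (hξ0 : μ[ξ | futureAlg 0] =ᵐ[μ] 0) (hε : 0 < ε) (n : ℕ) :
    ∑ t ∈ Finset.range n, |∫ z, ξ (shift^[t] z.1) * φ ((pathProd M z.1 t (n - t))⁻¹ • z.2) *
        relDensity (pathProd M z.1 0 n) z.2 ∂(μ.prod planeMeasure)| ≤
      K * D * (r * (1 / (2 * ε) * (planeMeasure.real univ * (4 * ∫ ω, log ‖pathProd M ω 0 n‖ ∂μ))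
        + 2 * ε * ((n + r : ℕ) : ℝ) * planeMeasure.real univ)) := by
  have hF0 : 0 < F := zero_lt_one.trans_le ((one_le_norm_sl _).trans (hF 0 0))
  have hK0 : 0 ≤ K := let ⟨ω, hω⟩ := hK.exists; (abs_nonneg _).trans hω
  have hD0 : 0 ≤ D := (abs_nonneg _).trans (hD 0)
  have hξi : Integrable ξ μ := .of_bound (hξ.mono (futureAlg_le _)).aestronglyMeasurable K hK
  rw [← Finset.sum_range_reflect]
  refine (sum_abs_integral_mul_le_of_condExp_eq_zero
    (G := fun q : ℕ => (futureAlg (n - 1 - q)).prod inferInstance) (r := r)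
    (fun _ => prod_futureAlg_le _) (fun q q' h => prod_futureAlg_anti (by omega))
    (mul_nonneg hK0 hD0) (fun q hq => ?_) (fun q _ => ?_) (fun q hq => ?_)
    (c := ((F ^ n) ^ 4)⁻¹) (by positivity) hε
    (integrable_relDensity_pathProd hF 0 n)
    (.of_forall fun z => relDensity_pathProd_mem_Icc hF z.1 0 n z.2)).trans ?_
  · refine .mul ((stronglyMeasurable_comp_shift_iterate hξ (by omega)).comp_measurable
      (@measurable_fst _ _ (futureAlg _) _)) (Measurable.stronglyMeasurable ?_)
    exact (measurable_comp_inv_pathProd_smul hφ _ _).mono (prod_futureAlg_anti (by omega)) le_rfl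
  · filter_upwards [Measure.quasiMeasurePreserving_fst.ae
      ((hμ.iterate (n - 1 - q)).quasiMeasurePreserving.ae hK)] with z hz
    rw [abs_mul]
    exact mul_le_mul hz (hD _) (abs_nonneg _) hK0
  · rw [show ((n : ℤ) - 1 - q) = (n - 1 - q : ℕ) by omega]
    exact condExp_comp_shift_fst_mul_eq_zero hμ hξi hξ0 _
      (measurable_comp_inv_pathProd_smul hφ _ _) fun z => hD _
  · have hent := integral_relDensity_pathProd_mul_log_le (μ := μ) hF 0 n
    have huniv : (μ.prod planeMeasure).real univ = planeMeasure.real univ := by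
      rw [← univ_prod_univ, measureReal_prod_prod, probReal_univ, one_mul]
    rw [integral_relDensity_pathProd hF, huniv]
    gcongr
    linarith

lemma measurable_integral_comp_smul {α : Type*} {mα : MeasurableSpace α} {P : α → SL(2, ℝ)}
    (hP : Measurable[mα, ⊤] P) (hφ : Measurable φ) :
    Measurable fun a => ∫ x, φ (P a • x) ∂planeMeasure :=
  (hφ.comp (measurable_smul_of_measurable_top (@Measurable.comp _ _ _ _ _ ⊤ _ _ hP measurable_fst)
    measurable_snd)).stronglyMeasurable.integral_prod_right'.measurable

lemma integral_mul_integral_smul_eq (hμ : MeasurePreserving shift μ μ) (hF : ∀ a b, ‖M a b‖ ≤ F)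
    (hφ : Measurable φ) (hD : ∀ x, |φ x| ≤ D) (hξ : Integrable ξ μ) {t n : ℕ} (htn : t ≤ n) :
    ∫ ω, ξ ω * ∫ x, φ (pathProd M ω (-t) t • x) ∂planeMeasure ∂μ =
      ∫ z, ξ (shift^[t] z.1) * φ ((pathProd M z.1 t (n - t))⁻¹ • z.2) *
        relDensity (pathProd M z.1 0 n) z.2 ∂(μ.prod planeMeasure) := by
  have hT := hμ.iterate t
  have hi : Integrable (fun z : (ℤ → ℕ) × (Fin 2 → ℝ) =>
      ξ (shift^[t] z.1) * φ ((pathProd M z.1 t (n - t))⁻¹ • z.2) *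
        relDensity (pathProd M z.1 0 n) z.2) (μ.prod planeMeasure) := by
    refine (((hT.integrable_comp_of_integrable hξ).comp_fst planeMeasure).mul_bdd (c := D) ?_
      (.of_forall fun z => hD _)).mul_bdd (c := (F ^ n) ^ 4)
      (measurable_relDensity_pathProd 0 n).aestronglyMeasurable (.of_forall fun z => ?_)
    · exact ((measurable_comp_inv_pathProd_smul hφ _ _).mono (prod_futureAlg_le t)
        le_rfl).aestronglyMeasurable
    · rw [norm_of_nonneg (relDensity_pos _ _).le]
      exact (relDensity_pathProd_mem_Icc hF z.1 0 n z.2).2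
  rw [← integral_comp_of_measurePreserving hT
    (f := fun ω => ξ ω * ∫ x, φ (pathProd M ω (-t) t • x) ∂planeMeasure)
    (hξ.1.mul (measurable_integral_comp_smul (measurable_pathProd _ _) hφ).aestronglyMeasurable),
    integral_prod _ hi]
  refine integral_congr_ae (.of_forall fun ω => ?_)
  have hsplit : pathProd M ω 0 n = pathProd M ω t (n - t) * pathProd M ω 0 t := by
    have h := pathProd_add (M := M) ω 0 t (n - t)
    rwa [Nat.add_sub_cancel' htn, zero_add] at h
  simp only [pathProd_shift_iterate, neg_add_cancel, mul_assoc, integral_const_mul]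
  rw [← integral_smul_planeMeasure _ fun x => φ ((pathProd M ω t (n - t))⁻¹ • x), hsplit]
  simp only [mul_smul, inv_smul_smul]

lemma sum_abs_integral_mul_integral_smul_le (hμ : MeasurePreserving shift μ μ)
    (hF : ∀ a b, ‖M a b‖ ≤ F) (hφ : Measurable φ) (hD : ∀ x, |φ x| ≤ D) {r : ℕ}
    (hξ : StronglyMeasurable[futureAlg (-r)] ξ) (hK : ∀ᵐ ω ∂μ, |ξ ω| ≤ K)
    (hξ0 : μ[ξ | futureAlg 0] =ᵐ[μ] 0) (hε : 0 < ε) (n : ℕ) :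
    ∑ t ∈ Finset.range n, |∫ ω, ξ ω * ∫ x, φ (pathProd M ω (-t) t • x) ∂planeMeasure ∂μ| ≤
      2 * K * D * planeMeasure.real univ * r *
        (1 / ε * ∫ ω, log ‖pathProd M ω 0 n‖ ∂μ + ε * (n + r)) := by
  have hξi : Integrable ξ μ := .of_bound (hξ.mono (futureAlg_le _)).aestronglyMeasurable K hK
  calc _ = ∑ t ∈ Finset.range n, |∫ z, ξ (shift^[t] z.1) *
        φ ((pathProd M z.1 t (n - t))⁻¹ • z.2) * relDensity (pathProd M z.1 0 n) z.2
          ∂(μ.prod planeMeasure)| :=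
        Finset.sum_congr rfl fun t ht => by
          rw [integral_mul_integral_smul_eq hμ hF hφ hD hξi (Finset.mem_range.1 ht).le]
    _ ≤ _ := sum_abs_integral_comp_shift_mul_relDensity_le hμ hF hφ hD hξ hK hξ0 hε n
    _ = _ := by
        push_cast
        field_simp
        ring

lemma abs_integral_planeMeasure_le (hD : ∀ x, |φ x| ≤ D) :
    |∫ x, φ x ∂planeMeasure| ≤ D * planeMeasure.real univ :=
  norm_integral_le_of_norm_le_const (f := φ) (.of_forall hD)

/-- The Cesàro averages of the images of `planeMeasure` under the products along the past,
integrated against the test function `φ`. -/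
noncomputable def pastAvg (M : ℕ → ℕ → SL(2, ℝ)) (φ : (Fin 2 → ℝ) → ℝ) (n : ℕ) (ω : ℤ → ℕ) : ℝ :=
  (1 / n) * ∑ t ∈ Finset.range n, ∫ x, φ (pathProd M ω (-t) t • x) ∂planeMeasure

lemma measurable_pastAvg (hφ : Measurable φ) {m : MeasurableSpace (ℤ → ℕ)}
    (hm : ∀ u ≤ 0, Measurable[m] fun ω : ℤ → ℕ => ω u) (n : ℕ) : Measurable[m] (pastAvg M φ n) :=
  .const_mul (Finset.measurable_fun_sum _ fun _ _ => measurable_integral_comp_smul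
    (measurable_pathProd_of_measurable_coord fun _ _ hu => hm _ (by omega)) hφ) _

lemma abs_pastAvg_le (hD : ∀ x, |φ x| ≤ D) (n : ℕ) (ω : ℤ → ℕ) :
    |pastAvg M φ n ω| ≤ D * planeMeasure.real univ := by
  have h0 : 0 ≤ D * planeMeasure.real univ :=
    mul_nonneg ((abs_nonneg _).trans (hD 0)) measureReal_nonneg
  rcases Nat.eq_zero_or_pos n with rfl | hn
  · simpa [pastAvg] using h0
  have hn' : (0 : ℝ) < n := by exact_mod_cast hn
  rw [pastAvg, abs_mul, abs_of_pos (by positivity), one_div, inv_mul_le_iff₀ hn']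
  refine (Finset.abs_sum_le_sum_abs _ _).trans ((Finset.sum_le_card_nsmul _ _ _ fun t _ =>
    abs_integral_planeMeasure_le fun x => hD _).trans ?_)
  rw [Finset.card_range, nsmul_eq_mul]

lemma abs_pastAvg_shift_sub_le (hD : ∀ x, |φ x| ≤ D) (n : ℕ) (ω : ℤ → ℕ) :
    |pastAvg M φ n (shift ω) - pastAvg M (fun x => φ (M (ω 0) (ω 1) • x)) n ω| ≤
      2 * D * planeMeasure.real univ / n := by
  rcases n with _ | n
  · simp [pastAvg]
  have htele (t : ℕ) :
      ∫ x, φ (pathProd M (shift ω) (-((t + 1 : ℕ) : ℤ)) (t + 1) • x) ∂planeMeasure =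
      ∫ x, φ (M (ω 0) (ω 1) • pathProd M ω (-t) t • x) ∂planeMeasure := by
    have h := pathProd_shift_iterate (M := M) 1 ω (-((t + 1 : ℕ) : ℤ)) (t + 1)
    rw [Function.iterate_one, show -((t + 1 : ℕ) : ℤ) + (1 : ℕ) = -t by push_cast; ring] at h
    rw [h]
    simp only [pathProd, mul_smul, neg_add_cancel, zero_add]
  have hbd (f : (Fin 2 → ℝ) → Fin 2 → ℝ) :
      |∫ x, φ (f x) ∂planeMeasure| ≤ D * planeMeasure.real univ :=
    abs_integral_planeMeasure_le fun x => hD _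
  simp only [pastAvg]
  rw [← mul_sub, abs_mul, abs_of_pos (by positivity), one_div, inv_mul_eq_div,
    Finset.sum_range_succ', Finset.sum_range_succ]
  simp_rw [htele]
  gcongr
  have hfirst := abs_le.1 (hbd fun x => pathProd M (shift ω) (-((0 : ℕ) : ℤ)) 0 • x)
  have hlast := abs_le.1 (hbd fun x => M (ω 0) (ω 1) • pathProd M ω (-(n : ℤ)) n • x)
  exact abs_le.2 ⟨by linarith, by linarith⟩

lemma integral_mul_pastAvg {ν : Measure (ℤ → ℕ)} (hφ : Measurable φ) (hD : ∀ x, |φ x| ≤ D)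
    (hξ : Integrable ξ ν) (n : ℕ) :
    ∫ ω, ξ ω * pastAvg M φ n ω ∂ν =
      (1 / n) * ∑ t ∈ Finset.range n,
        ∫ ω, ξ ω * ∫ x, φ (pathProd M ω (-t) t • x) ∂planeMeasure ∂ν := by
  rw [← integral_finsetSum, ← integral_const_mul]
  · simp only [pastAvg, ← Finset.mul_sum, mul_left_comm]
  · exact fun t _ => hξ.mul_bdd (c := D * planeMeasure.real univ)
      (measurable_integral_comp_smul (measurable_pathProd _ _) hφ).aestronglyMeasurable
      (.of_forall fun ω => abs_integral_planeMeasure_le fun x => hD _)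

lemma abs_integral_mul_pastAvg_le (hμ : MeasurePreserving shift μ μ)
    (hF : ∀ a b, ‖M a b‖ ≤ F) (hφ : Measurable φ) (hD : ∀ x, |φ x| ≤ D) {r : ℕ}
    (hξ : StronglyMeasurable[futureAlg (-r)] ξ) (hK : ∀ᵐ ω ∂μ, |ξ ω| ≤ K)
    (hξ0 : μ[ξ | futureAlg 0] =ᵐ[μ] 0) (hε : 0 < ε) {n : ℕ} (hn : 1 ≤ n) :
    |∫ ω, ξ ω * pastAvg M φ n ω ∂μ| ≤ 2 * K * D * planeMeasure.real univ * r *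
      (1 / ε * (1 / n * ∫ ω, log ‖pathProd M ω 0 n‖ ∂μ) + ε * (1 + r)) := by
  have hn' : (1 : ℝ) ≤ n := by exact_mod_cast hn
  have hK0 : 0 ≤ K := let ⟨ω, hω⟩ := hK.exists; (abs_nonneg _).trans hω
  have hD0 : 0 ≤ D := (abs_nonneg _).trans (hD 0)
  have hr : (n : ℝ) + r ≤ n * (1 + r) := by nlinarith [Nat.cast_nonneg (α := ℝ) r]
  rw [integral_mul_pastAvg hφ hD (.of_bound (hξ.mono (futureAlg_le _)).aestronglyMeasurable K hK),
    abs_mul, abs_of_pos (by positivity), one_div, inv_mul_le_iff₀ (by positivity)]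
  calc _ ≤ _ := Finset.abs_sum_le_sum_abs _ _
    _ ≤ _ := sum_abs_integral_mul_integral_smul_le hμ hF hφ hD hξ hK hξ0 hε n
    _ ≤ 2 * K * D * planeMeasure.real univ * r *
        (1 / ε * ∫ ω, log ‖pathProd M ω 0 n‖ ∂μ + ε * (n * (1 + r))) := by gcongr
    _ = _ := by field_simp

lemma tendsto_integral_mul_pastAvg (hμ : MeasurePreserving shift μ μ)
    (hF : ∀ a b, ‖M a b‖ ≤ F)
    (hlyap : Tendsto (fun n : ℕ => (1 / (n : ℝ)) * ∫ ω, log ‖pathProd M ω 0 n‖ ∂μ) atTop (𝓝 0))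
    (hφ : Measurable φ) (hD : ∀ x, |φ x| ≤ D) {r : ℕ}
    (hξ : StronglyMeasurable[futureAlg (-r)] ξ) (hK : ∀ᵐ ω ∂μ, |ξ ω| ≤ K)
    (hξ0 : μ[ξ | futureAlg 0] =ᵐ[μ] 0) :
    Tendsto (fun n => ∫ ω, ξ ω * pastAvg M φ n ω ∂μ) atTop (𝓝 0) := by
  set c : ℝ := 2 * K * D * planeMeasure.real univ * r
  have hlim (ε : ℝ) : Tendsto (fun n : ℕ => c * (1 / ε *
      ((1 / (n : ℝ)) * ∫ ω, log ‖pathProd M ω 0 n‖ ∂μ) + ε * (1 + r)))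
      atTop (𝓝 (ε * (c * (1 + r)))) := by
    convert ((hlyap.const_mul (1 / ε)).add_const (ε * (1 + r))).const_mul c using 2
    ring
  have hsmall : Tendsto (fun ε : ℝ => ε * (c * (1 + r))) (𝓝[>] 0) (𝓝 0) :=
    ((continuous_mul_const _).tendsto' 0 0 (zero_mul _)).mono_left nhdsWithin_le_nhds
  refine Metric.tendsto_nhds.2 fun δ hδ => ?_
  obtain ⟨ε, hεδ, hε⟩ := ((hsmall.eventually_lt_const hδ).and self_mem_nhdsWithin).exists
  filter_upwards [(hlim ε).eventually_lt_const hεδ, eventually_ge_atTop 1] with n hn hn1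
  rw [dist_zero_right]
  exact (abs_integral_mul_pastAvg_le hμ hF hφ hD hξ hK hξ0 hε hn1).trans_lt hn

end Correlation

section WeakLimit

lemma exists_tendsto_inner_of_norm_le {ι E : Type*} [NormedAddCommGroup E] [InnerProductSpace ℝ E]
    [CompleteSpace E] (𝒰 : Ultrafilter ι) {u : ι → E} {R : ℝ} (hu : ∀ i, ‖u i‖ ≤ R) :
    ∃ f : E, ∀ g, Tendsto (fun i => inner ℝ (u i) g) 𝒰 (𝓝 (inner ℝ f g)) := by
  set v : ι → WeakDual ℝ E := fun i => StrongDual.toWeakDual (InnerProductSpace.toDual ℝ E (u i))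
  have hmem (i : ι) : v i ∈ WeakDual.toStrongDual ⁻¹' Metric.closedBall (0 : StrongDual ℝ E) R :=
    mem_closedBall_zero_iff.2 (((InnerProductSpace.toDual ℝ E).norm_map (u i)).le.trans (hu i))
  obtain ⟨x, -, hx⟩ := (WeakDual.isCompact_closedBall (𝕜 := ℝ) (E := E) 0 R).ultrafilter_le_nhds
    (𝒰.map v) (le_principal_iff.2 (Filter.mem_map.2 (univ_mem' hmem)))
  refine ⟨(InnerProductSpace.toDual ℝ E).symm (WeakDual.toStrongDual x), fun g => ?_⟩
  rw [InnerProductSpace.toDual_symm_apply]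
  exact ((WeakDual.eval_continuous g).tendsto x).comp hx

variable {ι Ω : Type*} {m m0 : MeasurableSpace Ω} {μ : Measure Ω} {f g : Ω → ℝ} {s : Set Ω}

lemma inner_toLp_eq_integral (hf : MemLp f 2 μ) (hg : MemLp g 2 μ) :
    inner ℝ (hf.toLp f) (hg.toLp g) = ∫ ω, g ω * f ω ∂μ := by
  rw [L2.inner_def]
  refine integral_congr_ae ?_
  filter_upwards [hf.coeFn_toLp, hg.coeFn_toLp] with ω hfω hgω
  rw [hfω, hgω, RCLike.inner_apply, conj_trivial]

lemma integral_indicator_one_mul (hs : MeasurableSet s) (f : Ω → ℝ) :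
    ∫ ω, s.indicator (1 : Ω → ℝ) ω * f ω ∂μ = ∫ ω in s, f ω ∂μ := by
  rw [← integral_indicator hs]
  refine integral_congr_ae (.of_forall fun ω => ?_)
  by_cases hω : ω ∈ s <;> simp [hω]

variable [IsFiniteMeasure μ]

lemma exists_weak_limit_of_abs_le (𝒰 : Ultrafilter ι) {u : ι → Ω → ℝ} {R : ℝ}
    (hm : ∀ i, AEStronglyMeasurable (u i) μ) (hu : ∀ i ω, |u i ω| ≤ R) :
    ∃ f : Ω → ℝ, MemLp f 2 μ ∧ ∀ g, MemLp g 2 μ →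
      Tendsto (fun i => ∫ ω, g ω * u i ω ∂μ) 𝒰 (𝓝 (∫ ω, g ω * f ω ∂μ)) := by
  have hmem (i : ι) : MemLp (u i) 2 μ := .of_bound (hm i) R (.of_forall (hu i))
  have hnorm (i : ι) :
      ‖(hmem i).toLp (u i)‖ ≤ measureUnivNNReal μ ^ (2 : ENNReal).toReal⁻¹ * |R| := by
    refine Lp.norm_le_of_ae_bound (abs_nonneg R) ?_
    filter_upwards [(hmem i).coeFn_toLp] with ω h
    exact h ▸ (hu i ω).trans (le_abs_self R)
  obtain ⟨f, hf⟩ := exists_tendsto_inner_of_norm_le 𝒰 hnorm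
  have hf2 := Lp.memLp f
  refine ⟨f, hf2, fun g hg => ?_⟩
  have h := hf (hg.toLp g)
  rw [← Lp.toLp_coeFn f hf2] at h
  simpa only [inner_toLp_eq_integral] using h

lemma memLp_indicator_one (hs : MeasurableSet s) : MemLp (s.indicator (1 : Ω → ℝ)) 2 μ :=
  memLp_indicator_const 2 hs 1 (.inr (measure_ne_top μ s))

lemma integral_mul_condExp_comm (hm : m ≤ m0) (hf : MemLp f 2 μ) (hg : MemLp g 2 μ) :
    ∫ ω, g ω * (μ[f | m]) ω ∂μ = ∫ ω, (μ[g | m]) ω * f ω ∂μ := by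
  have hf' : MemLp (μ[f | m]) 2 μ := hf.condExp one_le_two
  have hg' : MemLp (μ[g | m]) 2 μ := hg.condExp one_le_two
  rw [← integral_mul_condExp hm stronglyMeasurable_condExp.aestronglyMeasurable
    (hg'.integrable_mul hf) (hf.integrable one_le_two)]
  simp_rw [mul_comm _ ((μ[f | m]) _)]
  exact (integral_mul_condExp hm stronglyMeasurable_condExp.aestronglyMeasurable
    (hf'.integrable_mul hg) (hg.integrable one_le_two)).symm

lemma setIntegral_condExp_eq_integral_condExp_mul (hm : m ≤ m0) (hs : MeasurableSet s)
    (hf : MemLp f 2 μ) :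
    ∫ ω in s, (μ[f | m]) ω ∂μ = ∫ ω, (μ[s.indicator (1 : Ω → ℝ) | m]) ω * f ω ∂μ := by
  rw [← integral_indicator_one_mul hs, integral_mul_condExp_comm hm hf (memLp_indicator_one hs)]

lemma ae_eq_condExp_of_weak_limit (hm : m ≤ m0) {l : Filter ι} [l.NeBot] {u : ι → Ω → ℝ}
    (hum : ∀ i, AEStronglyMeasurable[m] (u i) μ) (hu : ∀ i, MemLp (u i) 2 μ) (hf : MemLp f 2 μ)
    (hlim : ∀ g, MemLp g 2 μ →
      Tendsto (fun i => ∫ ω, g ω * u i ω ∂μ) l (𝓝 (∫ ω, g ω * f ω ∂μ))) :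
    f =ᵐ[μ] μ[f | m] := by
  refine (hf.integrable one_le_two).ae_eq_of_forall_setIntegral_eq _ _ integrable_condExp
    fun s hs _ => ?_
  have h1 : MemLp (s.indicator (1 : Ω → ℝ)) 2 μ := memLp_indicator_one hs
  have hu1 (i : ι) : ∫ ω, (μ[s.indicator (1 : Ω → ℝ) | m]) ω * u i ω ∂μ =
      ∫ ω, s.indicator (1 : Ω → ℝ) ω * u i ω ∂μ := by
    rw [← integral_mul_condExp_comm hm (hu i) h1]
    refine integral_congr_ae ?_
    filter_upwards [condExp_of_aestronglyMeasurable' hm (hum i) ((hu i).integrable one_le_two)]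
      with ω hω
    rw [hω]
  have hl := hlim _ (h1.condExp (m := m) one_le_two)
  simp_rw [hu1] at hl
  rw [setIntegral_condExp_eq_integral_condExp_mul hm hs hf, ← integral_indicator_one_mul hs]
  exact tendsto_nhds_unique (hlim _ h1) hl

lemma ae_eq_of_forall_condExp_ae_eq {ℱ : Filtration ℕ m0} (hℱ : ⨆ n, ℱ n = m0)
    (hf : Integrable f μ) (hg : StronglyMeasurable g) (hgi : Integrable g μ)
    (h : ∀ n, μ[f | ℱ n] =ᵐ[μ] μ[g | ℱ n]) : f =ᵐ[μ] g := by
  have hself : μ[f | ⨆ n, ℱ n] =ᵐ[μ] f := by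
    rw [hℱ]
    exact condExp_of_aestronglyMeasurable' le_rfl hf.1 hf
  filter_upwards [tendsto_ae_condExp (ℱ := ℱ) f,
    hgi.tendsto_ae_condExp (by rwa [hℱ]), hself, ae_all_iff.2 h] with ω hfω hgω hω heq
  simp_rw [hω, heq] at hfω
  exact tendsto_nhds_unique hfω hgω

end WeakLimit

section FutureMeasurability

/-- The filtration of the σ-algebras generated by the coordinates `ω u`, `u ≥ -n`. -/
def futureFiltration : Filtration ℕ (MeasurableSpace.pi : MeasurableSpace (ℤ → ℕ)) where
  seq n := futureAlg (-n)
  mono' _ _ h := futureAlg_anti (by omega)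
  le' _ := futureAlg_le _

lemma iSup_futureFiltration : ⨆ n, futureFiltration n = MeasurableSpace.pi := by
  exact le_antisymm (iSup_le futureFiltration.le) (iSup_le fun u =>
    (measurable_coord_futureAlg (s := -u.natAbs) (u := u) (by omega)).comap_le.trans
      (le_iSup (futureFiltration ·) u.natAbs))

variable {μ : Measure (ℤ → ℕ)} [IsFiniteMeasure μ] {f : (ℤ → ℕ) → ℝ}

lemma ae_eq_condExp_futureAlg (hf : MemLp f 2 μ)
    (h0 : ∀ (r : ℕ) (s : Set (ℤ → ℕ)), MeasurableSet[futureAlg (-r)] s →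
      ∫ ω, (s.indicator (1 : (ℤ → ℕ) → ℝ) - μ[s.indicator (1 : (ℤ → ℕ) → ℝ) | futureAlg 0]) ω *
        f ω ∂μ = 0) :
    f =ᵐ[μ] μ[f | futureAlg 0] := by
  have hfi : Integrable f μ := hf.integrable one_le_two
  refine ae_eq_of_forall_condExp_ae_eq iSup_futureFiltration hfi
    (stronglyMeasurable_condExp.mono (futureAlg_le 0)) integrable_condExp fun r => ?_
  have hr : StronglyMeasurable[futureFiltration r] (μ[f | futureAlg 0]) :=
    stronglyMeasurable_condExp.mono (futureAlg_anti (by omega))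
  rw [condExp_of_stronglyMeasurable (futureFiltration.le r) hr integrable_condExp]
  refine (ae_eq_condExp_of_forall_setIntegral_eq (futureFiltration.le r) hfi
    (fun _ _ _ => integrable_condExp.integrableOn) (fun s hs _ => ?_)
    hr.aestronglyMeasurable).symm
  have hs' : MeasurableSet s := futureFiltration.le r s hs
  have h1 : MemLp (s.indicator (1 : (ℤ → ℕ) → ℝ)) 2 μ := memLp_indicator_one hs'
  have h := h0 r s hs
  rw [← Pi.mul_def, sub_mul, integral_sub' (h1.integrable_mul hf)
    ((h1.condExp one_le_two).integrable_mul hf), sub_eq_zero] at h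
  simp only [Pi.mul_apply, integral_indicator_one_mul hs'] at h
  rw [h, setIntegral_condExp_eq_integral_condExp_mul (futureAlg_le 0) hs' hf]

end FutureMeasurability

section LocalProduct

variable {ℓ : ℕ} {W : Set (ℕ × ℕ)} {μ : Measure (ℤ → ℕ)}

lemma measurable_projPlus : Measurable projPlus :=
  measurable_pi_lambda _ fun _ => measurable_pi_apply _

lemma measurable_projMinus : Measurable projMinus :=
  measurable_pi_lambda _ fun _ => measurable_pi_apply _

lemma measurable_pairProj : Measurable pairProj :=
  measurable_projMinus.prodMk measurable_projPlus

lemma measurableSet_eval_eq {ι : Type*} (u : ι) (a : ℕ) : MeasurableSet {x : ι → ℕ | x u = a} :=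
  measurableSet_eq_fun (measurable_pi_apply u) measurable_const

/-- The one-sided subshift of finite type. Pasts of points of `SFT ℓ W`, read backwards, are
one-sided sequences for the reversed transitions `Prod.swap ⁻¹' W`. -/
def oneSidedSFT (ℓ : ℕ) (W : Set (ℕ × ℕ)) : Set (ℕ → ℕ) :=
  {x | (∀ n, 1 ≤ x n ∧ x n ≤ ℓ) ∧ ∀ n, (x n, x (n + 1)) ∈ W}

lemma measurableSet_oneSidedSFT : MeasurableSet (oneSidedSFT ℓ W) := by
  have h : oneSidedSFT ℓ W =
      (⋂ n, (fun x => x n) ⁻¹' Icc 1 ℓ) ∩ ⋂ n, (fun x => (x n, x (n + 1))) ⁻¹' W := by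
    ext
    simp [oneSidedSFT]
  rw [h]
  refine .inter (.iInter fun n => ?_) (.iInter fun n => ?_)
  · exact measurable_pi_apply n (measurableSet_Icc (a := 1) (b := ℓ))
  · exact ((measurable_pi_apply n).prodMk (measurable_pi_apply (n + 1))) (.of_discrete (s := W))

lemma projPlus_mem_oneSidedSFT {ω : ℤ → ℕ} (hω : ω ∈ SFT ℓ W) : projPlus ω ∈ oneSidedSFT ℓ W :=
  ⟨fun n => hω.1 n, fun n => by simpa [projPlus] using hω.2 n⟩

lemma projMinus_mem_oneSidedSFT {ω : ℤ → ℕ} (hω : ω ∈ SFT ℓ W) :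
    projMinus ω ∈ oneSidedSFT ℓ (Prod.swap ⁻¹' W) := by
  refine ⟨fun n => hω.1 (-n), fun n => ?_⟩
  have h := hω.2 (-((n + 1 : ℕ) : ℤ))
  rwa [show -((n + 1 : ℕ) : ℤ) + 1 = -(n : ℤ) by push_cast; ring] at h

lemma exists_mem_SFT_pairProj_eq {y x : ℕ → ℕ} (h0 : y 0 = x 0)
    (hy : y ∈ oneSidedSFT ℓ (Prod.swap ⁻¹' W)) (hx : x ∈ oneSidedSFT ℓ W) :
    ∃ ω ∈ SFT ℓ W, pairProj ω = (y, x) := by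
  set ω : ℤ → ℕ := fun n => if 0 ≤ n then x n.toNat else y (-n).toNat
  have hpos (n : ℕ) : ω n = x n := by simp [ω]
  have hneg (n : ℕ) : ω (-n) = y n := by
    rcases n with _ | n
    · simpa [ω] using h0.symm
    · rw [show ω (-(n + 1 : ℕ)) = y (-(-(n + 1 : ℕ) : ℤ)).toNat from if_neg (by omega)]
      congr 1
  refine ⟨ω, ⟨fun n => ?_, fun n => ?_⟩, Prod.ext (funext hneg) (funext hpos)⟩
  · obtain ⟨k, rfl | rfl⟩ := n.eq_nat_or_neg
    · exact hpos k ▸ hx.1 k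
    · exact hneg k ▸ hy.1 k
  · rcases lt_or_ge n 0 with hn | hn
    · obtain ⟨k, rfl⟩ : ∃ k : ℕ, n = -(k + 1 : ℕ) := ⟨(-n - 1).toNat, by omega⟩
      rw [hneg, show -((k + 1 : ℕ) : ℤ) + 1 = -k by push_cast; ring, hneg]
      exact hy.2 k
    · lift n to ℕ using hn
      rw [hpos, ← Nat.cast_succ, hpos]
      exact hx.2 n

lemma prod_absolutelyContinuous_map_pairProj (hconc : ∀ᵐ ω ∂μ, ω ∈ SFT ℓ W)
    (hlps : LocalProductStructure ℓ W μ) {j : ℕ} (hj : 1 ≤ j) (hjℓ : j ≤ ℓ) :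
    ((Measure.map projMinus μ).restrict {a | a 0 = j}).prod
        ((Measure.map projPlus μ).restrict {a | a 0 = j}) ≪
      Measure.map pairProj (μ.restrict {ω | ω 0 = j}) := by
  obtain ⟨ψ, hψ, hmap⟩ := hlps
  obtain ⟨hInt, hmap⟩ := hmap j hj hjℓ
  have hm : ∀ᵐ y ∂(Measure.map projMinus μ).restrict {a | a 0 = j},
      y 0 = j ∧ y ∈ oneSidedSFT ℓ (Prod.swap ⁻¹' W) :=
    (ae_restrict_mem (measurableSet_eval_eq 0 j)).and (ae_restrict_of_ae
      ((ae_map_iff measurable_projMinus.aemeasurable measurableSet_oneSidedSFT).2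
        (hconc.mono fun _ => projMinus_mem_oneSidedSFT)))
  have hp : ∀ᵐ x ∂(Measure.map projPlus μ).restrict {a | a 0 = j},
      x 0 = j ∧ x ∈ oneSidedSFT ℓ W :=
    (ae_restrict_mem (measurableSet_eval_eq 0 j)).and (ae_restrict_of_ae
      ((ae_map_iff measurable_projPlus.aemeasurable measurableSet_oneSidedSFT).2
        (hconc.mono fun _ => projPlus_mem_oneSidedSFT)))
  rw [hmap]
  refine withDensity_absolutelyContinuous' hInt.1.aemeasurable.ennreal_ofReal ?_
  filter_upwards [Measure.quasiMeasurePreserving_fst.ae hm,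
    Measure.quasiMeasurePreserving_snd.ae hp] with z hz1 hz2
  obtain ⟨ω, hω, he⟩ := exists_mem_SFT_pairProj_eq (hz1.1.trans hz2.1.symm) hz1.2 hz2.2
  exact (ENNReal.ofReal_pos.2 ((hψ ω hω).trans_eq (congrArg ψ he))).ne'

lemma exists_ae_eq_const_of_ae_prod {α β γ : Type*} [MeasurableSpace α] [MeasurableSpace β]
    {ρ : Measure α} {ρ' : Measure β} [SFinite ρ'] (hρ : ρ ≠ 0) {f : α → γ} {g : β → γ}
    (h : ∀ᵐ z ∂ρ.prod ρ', f z.1 = g z.2) : ∃ c, ∀ᵐ x ∂ρ', g x = c := by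
  have : (ae ρ).NeBot := ae_neBot.2 hρ
  obtain ⟨y, hy⟩ := (Measure.ae_ae_of_ae_prod h).exists
  exact ⟨f y, hy.mono fun x hx => hx.symm⟩

lemma mem_Icc_of_cylinder_ne_zero (hconc : ∀ᵐ ω ∂μ, ω ∈ SFT ℓ W) {j : ℕ}
    (hj : μ {ω | ω 0 = j} ≠ 0) : j ∈ Icc 1 ℓ := by
  obtain ⟨ω, hω0, hω⟩ := Measure.exists_mem_of_measure_ne_zero_of_ae hj (ae_restrict_of_ae hconc)
  exact (show ω 0 = j from hω0) ▸ hω.1 0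

lemma exists_const_of_localProductStructure [SFinite μ] (hconc : ∀ᵐ ω ∂μ, ω ∈ SFT ℓ W)
    (hlps : LocalProductStructure ℓ W μ) {j : ℕ} (hj : μ {ω | ω 0 = j} ≠ 0)
    {f g : (ℕ → ℕ) → ℝ} (hf : Measurable f) (hg : Measurable g)
    (h : ∀ᵐ ω ∂μ, f (projMinus ω) = g (projPlus ω)) :
    ∃ c, ∀ᵐ ω ∂μ, ω 0 = j → g (projPlus ω) = c := by
  obtain ⟨hj1, hjℓ⟩ := mem_Icc_of_cylinder_ne_zero hconc hj
  have hset : MeasurableSet {z : (ℕ → ℕ) × (ℕ → ℕ) | f z.1 = g z.2} :=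
    measurableSet_eq_fun (hf.comp measurable_fst) (hg.comp measurable_snd)
  have heq := (prod_absolutelyContinuous_map_pairProj hconc hlps hj1 hjℓ).ae_le
    ((ae_map_iff measurable_pairProj.aemeasurable hset).2 (ae_restrict_of_ae h))
  have hne : (Measure.map projMinus μ).restrict {a | a 0 = j} ≠ 0 := by
    rwa [Ne, Measure.restrict_eq_zero,
      Measure.map_apply measurable_projMinus (measurableSet_eval_eq 0 j)]
  obtain ⟨c, hc⟩ := exists_ae_eq_const_of_ae_prod hne heq
  refine ⟨c, ?_⟩
  rw [ae_restrict_iff' (measurableSet_eval_eq 0 j)] at hc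
  exact ae_of_ae_map measurable_projPlus.aemeasurable hc

lemma exists_measurable_comp_ae_eq {α β : Type*} [MeasurableSpace α] [mβ : MeasurableSpace β]
    {ν : Measure α} {p : α → β} {f : α → ℝ} (h : f =ᵐ[ν] ν[f | mβ.comap p]) :
    ∃ g : β → ℝ, Measurable g ∧ f =ᵐ[ν] g ∘ p := by
  obtain ⟨g, hg, hgp⟩ := (stronglyMeasurable_condExp (μ := ν) (m := mβ.comap p)
    (f := f)).measurable.exists_eq_measurable_comp
  exact ⟨g, hg, h.trans (.of_eq hgp)⟩

end LocalProduct

section PastAverages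

variable {ℓ : ℕ} {W : Set (ℕ × ℕ)} {μ : Measure (ℤ → ℕ)} [IsProbabilityMeasure μ]
  {M : ℕ → ℕ → SL(2, ℝ)} {φ : (Fin 2 → ℝ) → ℝ} {F D : ℝ}

lemma memLp_pastAvg (hφ : Measurable φ) (hD : ∀ x, |φ x| ≤ D) (n : ℕ) :
    MemLp (pastAvg M φ n) 2 μ :=
  .of_bound (measurable_pastAvg hφ (fun u _ => measurable_pi_apply u) n).aestronglyMeasurable _
    (.of_forall (abs_pastAvg_le hD n))

lemma measurable_pastAvg_comap_projMinus (hφ : Measurable φ) (n : ℕ) :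
    Measurable[MeasurableSpace.comap projMinus inferInstance] (pastAvg M φ n) := by
  refine measurable_pastAvg hφ (fun u hu => ?_) n
  have h := (measurable_pi_apply (X := fun _ : ℕ => ℕ) (-u).toNat).comp
    (comap_measurable (m := inferInstance) projMinus)
  have hu' : -((-u).toNat : ℤ) = u := by omega
  simpa only [Function.comp_def, projMinus, hu'] using h

lemma ae_eq_condExp_futureAlg_of_tendsto_pastAvg (hμ : MeasurePreserving shift μ μ)
    (hF : ∀ a b, ‖M a b‖ ≤ F)
    (hlyap : Tendsto (fun n : ℕ => (1 / (n : ℝ)) * ∫ ω, log ‖pathProd M ω 0 n‖ ∂μ) atTop (𝓝 0))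
    {l : Filter ℕ} [l.NeBot] (hl : l ≤ atTop) (hφ : Measurable φ) (hD : ∀ x, |φ x| ≤ D)
    {f : (ℤ → ℕ) → ℝ} (hf : MemLp f 2 μ)
    (hlim : ∀ g, MemLp g 2 μ →
      Tendsto (fun n => ∫ ω, g ω * pastAvg M φ n ω ∂μ) l (𝓝 (∫ ω, g ω * f ω ∂μ))) :
    f =ᵐ[μ] μ[f | futureAlg 0] := by
  refine ae_eq_condExp_futureAlg hf fun r s hs => ?_
  set χ : (ℤ → ℕ) → ℝ := s.indicator 1
  have hχ : MemLp χ 2 μ := memLp_indicator_one (futureAlg_le _ s hs)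
  have hχi : Integrable χ μ := hχ.integrable one_le_two
  have hχ01 (ω : ℤ → ℕ) : χ ω ∈ Icc (0 : ℝ) 1 :=
    ⟨indicator_nonneg (fun _ _ => zero_le_one) ω, indicator_le_self' (fun _ _ => zero_le_one) ω⟩
  have hχm : StronglyMeasurable[futureAlg (-r)] χ := stronglyMeasurable_one.indicator hs
  have hξ0 : μ[χ - μ[χ | futureAlg 0] | futureAlg 0] =ᵐ[μ] 0 := by
    filter_upwards [condExp_sub hχi integrable_condExp (futureAlg 0),
      condExp_condExp_of_le (f := χ) (μ := μ) le_rfl (futureAlg_le 0)] with ω hω hω'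
    rw [hω, Pi.sub_apply, hω', sub_self, Pi.zero_apply]
  refine tendsto_nhds_unique (hlim _ (hχ.sub (hχ.condExp one_le_two)))
    ((tendsto_integral_mul_pastAvg hμ hF hlyap hφ hD (r := r) (K := 1)
      (hχm.sub (stronglyMeasurable_condExp.mono (futureAlg_anti (by omega)))) ?_ hξ0).mono_left hl)
  filter_upwards [condExp_mem_Icc (futureAlg_le 0) hχi (.of_forall hχ01)] with ω hω
  exact abs_sub_le_of_nonneg_of_le (hχ01 ω).1 (hχ01 ω).2 hω.1 hω.2

lemma exists_tendsto_setIntegral_pastAvg (hconc : ∀ᵐ ω ∂μ, ω ∈ SFT ℓ W)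
    (hlps : LocalProductStructure ℓ W μ) (hμ : MeasurePreserving shift μ μ)
    (hF : ∀ a b, ‖M a b‖ ≤ F)
    (hlyap : Tendsto (fun n : ℕ => (1 / (n : ℝ)) * ∫ ω, log ‖pathProd M ω 0 n‖ ∂μ) atTop (𝓝 0))
    {𝒰 : Ultrafilter ℕ} (h𝒰 : (𝒰 : Filter ℕ) ≤ atTop) (hφ : Measurable φ) (hD : ∀ x, |φ x| ≤ D)
    {j : ℕ} (hj : μ {ω | ω 0 = j} ≠ 0) :
    ∃ c : ℝ, ∀ s : Set (ℤ → ℕ), MeasurableSet s → s ⊆ {ω | ω 0 = j} →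
      Tendsto (fun n => ∫ ω in s, pastAvg M φ n ω ∂μ) 𝒰 (𝓝 (c * μ.real s)) := by
  obtain ⟨f, hf, hlim⟩ := exists_weak_limit_of_abs_le (μ := μ) 𝒰
    (fun n => (memLp_pastAvg (M := M) hφ hD n).1) (abs_pastAvg_le hD)
  have hpast : f =ᵐ[μ] μ[f | MeasurableSpace.comap projMinus inferInstance] :=
    ae_eq_condExp_of_weak_limit measurable_projMinus.comap_le (fun n =>
      (measurable_pastAvg_comap_projMinus hφ n).stronglyMeasurable.aestronglyMeasurable)
      (memLp_pastAvg hφ hD) hf hlim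
  have hfuture := ae_eq_condExp_futureAlg_of_tendsto_pastAvg hμ hF hlyap h𝒰 hφ hD hf hlim
  obtain ⟨f₁, hf₁, hff₁⟩ := exists_measurable_comp_ae_eq hpast
  obtain ⟨f₂, hf₂, hff₂⟩ := exists_measurable_comp_ae_eq hfuture
  have hzero : (fun (ω : ℤ → ℕ) (i : ℕ) => ω (0 + i)) = projPlus := by
    funext ω i
    rw [zero_add, projPlus]
  rw [hzero] at hff₂
  obtain ⟨c, hc⟩ := exists_const_of_localProductStructure hconc hlps hj hf₁ hf₂
    (hff₁.symm.trans hff₂)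
  refine ⟨c, fun s hs hsj => ?_⟩
  have h := hlim _ (memLp_indicator_one hs)
  simp_rw [integral_indicator_one_mul hs] at h
  have hconst : ∫ ω in s, f ω ∂μ = ∫ _ in s, c ∂μ := by
    refine setIntegral_congr_ae hs ?_
    filter_upwards [hc, hff₂] with _ hω hω' hωs
    exact hω'.trans (hω (hsj hωs))
  rwa [hconst, setIntegral_const, smul_eq_mul, mul_comm] at h

end PastAverages

section PlaneMean

/-- Bounded Borel functions on the plane, the test functions of plane means. -/
def IsBddMeasurable (φ : (Fin 2 → ℝ) → ℝ) : Prop := Measurable φ ∧ ∃ D, ∀ x, |φ x| ≤ D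

/-- Means on the punctured plane: normalized positive functionals on the bounded Borel functions on
the plane which do not charge the origin. The value of `ν` at other functions is irrelevant. -/
structure IsPlaneMean (ν : ((Fin 2 → ℝ) → ℝ) → ℝ) : Prop where
  add : ∀ {f g}, IsBddMeasurable f → IsBddMeasurable g → ν (fun x => f x + g x) = ν f + ν g
  const_mul : ∀ (c : ℝ) {f}, IsBddMeasurable f → ν (fun x => c * f x) = c * ν f
  one : ν (fun _ => 1) = 1
  nonneg : ∀ {f}, IsBddMeasurable f → (∀ x, x ≠ 0 → 0 ≤ f x) → 0 ≤ ν f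

namespace IsBddMeasurable

variable {f g : (Fin 2 → ℝ) → ℝ}

lemma add (hf : IsBddMeasurable f) (hg : IsBddMeasurable g) :
    IsBddMeasurable fun x => f x + g x := by
  obtain ⟨hf, C, hC⟩ := hf
  obtain ⟨hg, D, hD⟩ := hg
  exact ⟨hf.add hg, C + D, fun x => (abs_add_le _ _).trans (add_le_add (hC x) (hD x))⟩

lemma const_mul (c : ℝ) (hf : IsBddMeasurable f) : IsBddMeasurable fun x => c * f x := by
  obtain ⟨hf, C, hC⟩ := hf
  exact ⟨hf.const_mul c, |c| * C, fun x =>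
    (abs_mul _ _).trans_le (mul_le_mul_of_nonneg_left (hC x) (abs_nonneg _))⟩

lemma comp_smul (hf : IsBddMeasurable f) (g : SL(2, ℝ)) : IsBddMeasurable fun x => f (g • x) :=
  ⟨hf.1.comp (measurable_smul_of_measurable_top (P := fun _ => g) measurable_const measurable_id),
    hf.2.imp fun _ h _ => h _⟩

lemma one : IsBddMeasurable fun _ => 1 := ⟨measurable_const, 1, fun _ => abs_one.le⟩

lemma integrable {ν : Measure (Fin 2 → ℝ)} [IsFiniteMeasure ν] (hf : IsBddMeasurable f) :
    Integrable f ν := by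
  obtain ⟨hm, D, hD⟩ := hf
  exact .of_bound hm.aestronglyMeasurable D (.of_forall hD)

end IsBddMeasurable

end PlaneMean

section LimitMean

variable {ℓ : ℕ} {W : Set (ℕ × ℕ)} {μ : Measure (ℤ → ℕ)} {M : ℕ → ℕ → SL(2, ℝ)} {F D : ℝ}
  {φ φ' : (Fin 2 → ℝ) → ℝ} {l : Filter ℕ} {ν : ℕ → ((Fin 2 → ℝ) → ℝ) → ℝ}

lemma pastAvg_add (hφ : IsBddMeasurable φ) (hφ' : IsBddMeasurable φ') (n : ℕ) (ω : ℤ → ℕ) :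
    pastAvg M (fun x => φ x + φ' x) n ω = pastAvg M φ n ω + pastAvg M φ' n ω := by
  simp only [pastAvg]
  rw [← mul_add, ← Finset.sum_add_distrib]
  congr 1
  exact Finset.sum_congr rfl fun t _ =>
    integral_add (hφ.comp_smul _).integrable (hφ'.comp_smul _).integrable

lemma pastAvg_const_mul (c : ℝ) (n : ℕ) (ω : ℤ → ℕ) :
    pastAvg M (fun x => c * φ x) n ω = c * pastAvg M φ n ω := by
  simp only [pastAvg, integral_const_mul, ← Finset.mul_sum]
  exact mul_left_comm _ _ _

lemma pastAvg_nonneg (hφ : ∀ x, x ≠ 0 → 0 ≤ φ x) (n : ℕ) (ω : ℤ → ℕ) : 0 ≤ pastAvg M φ n ω := by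
  refine mul_nonneg (by positivity) (Finset.sum_nonneg fun t _ => integral_nonneg_of_ae ?_)
  have h0 : ∀ᵐ x ∂planeMeasure, x ≠ 0 := by
    rw [ae_iff]
    simpa using planeMeasure_singleton_zero
  filter_upwards [h0] with x hx
  exact hφ _ ((smul_ne_zero_iff_ne _).2 hx)

lemma pastAvg_one {n : ℕ} (hn : n ≠ 0) (ω : ℤ → ℕ) :
    pastAvg M (fun _ => 1) n ω = planeMeasure.real univ := by
  have hn' : (n : ℝ) ≠ 0 := by exact_mod_cast hn
  simp [pastAvg, hn']

lemma integrable_pastAvg [IsFiniteMeasure μ] (hφ : IsBddMeasurable φ) (n : ℕ) :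
    Integrable (pastAvg M φ n) μ := by
  obtain ⟨hm, D, hD⟩ := hφ
  exact .of_bound (measurable_pastAvg hm (fun u _ => measurable_pi_apply u) n).aestronglyMeasurable
    _ (.of_forall (abs_pastAvg_le hD n))

lemma tendsto_setIntegral_pastAvg_sub_comp_smul [IsFiniteMeasure μ]
    (hμ : MeasurePreserving shift μ μ) (hφ : IsBddMeasurable φ) (a b : ℕ) :
    Tendsto (fun n => ∫ ω in {ω | ω (-1) = a ∧ ω 0 = b}, pastAvg M φ n ω ∂μ -
      ∫ ω in {ω | ω 0 = a ∧ ω 1 = b}, pastAvg M (fun x => φ (M a b • x)) n ω ∂μ) atTop (𝓝 0) := by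
  set s : Set (ℤ → ℕ) := {ω | ω 0 = a ∧ ω 1 = b}
  set s' : Set (ℤ → ℕ) := {ω | ω (-1) = a ∧ ω 0 = b}
  have hs' : MeasurableSet s' := (measurableSet_eval_eq (-1) a).inter (measurableSet_eval_eq 0 b)
  have hpre : shift ⁻¹' s' = s := by ext ω; simp [s, s', shift]
  obtain ⟨D, hD⟩ := hφ.2
  have hshift (n : ℕ) :
      ∫ ω in s', pastAvg M φ n ω ∂μ = ∫ ω in s, pastAvg M φ n (shift ω) ∂μ := by
    have hm := (integrable_pastAvg (M := M) (μ := μ) hφ n).1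
    rw [← hpre, ← integral_indicator hs', ← integral_indicator (hμ.measurable hs'),
      ← integral_comp_of_measurePreserving hμ (hm.indicator hs')]
    rfl
  refine squeeze_zero_norm (fun n => ?_)
    (tendsto_const_div_atTop_nhds_zero_nat (2 * D * planeMeasure.real univ * μ.real s))
  have hi : Integrable (fun ω => pastAvg M φ n (shift ω)) μ :=
    hμ.integrable_comp_of_integrable (integrable_pastAvg hφ n)
  rw [hshift, ← integral_sub hi.integrableOn (integrable_pastAvg (hφ.comp_smul _) n),
    mul_div_right_comm]
  refine norm_setIntegral_le_of_norm_le_const (measure_lt_top _ _) fun ω hω => ?_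
  have h := abs_pastAvg_shift_sub_le (M := M) hD n ω
  rwa [hω.1, hω.2] at h

/-- `ν a φ` is the limit along `l` of the averages `pastAvg M φ`, normalized and integrated over any
part of the cylinder of the letter `a`. -/
def IsLimitMean (μ : Measure (ℤ → ℕ)) (M : ℕ → ℕ → SL(2, ℝ)) (l : Filter ℕ)
    (ν : ℕ → ((Fin 2 → ℝ) → ℝ) → ℝ) : Prop :=
  ∀ a φ, μ {ω | ω 0 = a} ≠ 0 → IsBddMeasurable φ → ∀ s, MeasurableSet s → s ⊆ {ω | ω 0 = a} →
    Tendsto (fun n => ∫ ω in s, pastAvg M φ n ω ∂μ) l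
      (𝓝 (planeMeasure.real univ * ν a φ * μ.real s))

lemma exists_isLimitMean [IsProbabilityMeasure μ] (hconc : ∀ᵐ ω ∂μ, ω ∈ SFT ℓ W)
    (hlps : LocalProductStructure ℓ W μ) (hμ : MeasurePreserving shift μ μ)
    (hF : ∀ a b, ‖M a b‖ ≤ F)
    (hlyap : Tendsto (fun n : ℕ => (1 / (n : ℝ)) * ∫ ω, log ‖pathProd M ω 0 n‖ ∂μ) atTop (𝓝 0))
    {𝒰 : Ultrafilter ℕ} (h𝒰 : (𝒰 : Filter ℕ) ≤ atTop) : ∃ ν, IsLimitMean μ M 𝒰 ν := by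
  have hlim (a : ℕ) (φ : (Fin 2 → ℝ) → ℝ) (ha : μ {ω | ω 0 = a} ≠ 0) (hφ : IsBddMeasurable φ) :
      ∃ c : ℝ, ∀ s, MeasurableSet s → s ⊆ {ω | ω 0 = a} →
        Tendsto (fun n => ∫ ω in s, pastAvg M φ n ω ∂μ) 𝒰
          (𝓝 (planeMeasure.real univ * c * μ.real s)) := by
    obtain ⟨hm, D, hD⟩ := hφ
    obtain ⟨c, hc⟩ := exists_tendsto_setIntegral_pastAvg hconc hlps hμ hF hlyap h𝒰 hm hD ha
    refine ⟨c / planeMeasure.real univ, fun s hs hsa => ?_⟩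
    rw [mul_div_cancel₀ _ measureReal_planeMeasure_univ_pos.ne']
    exact hc s hs hsa
  choose! ν hν using hlim
  exact ⟨ν, hν⟩

namespace IsLimitMean

lemma eq_of_tendsto [IsFiniteMeasure μ] [l.NeBot] {s : Set (ℤ → ℕ)} (hs : μ s ≠ 0) {u : ℕ → ℝ}
    {c c' : ℝ} (h : Tendsto u l (𝓝 (planeMeasure.real univ * c * μ.real s)))
    (h' : Tendsto u l (𝓝 (planeMeasure.real univ * c' * μ.real s))) : c = c' := by
  have hs' : 0 < μ.real s := ENNReal.toReal_pos hs (measure_ne_top _ _)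
  exact mul_left_cancel₀ measureReal_planeMeasure_univ_pos.ne'
    (mul_right_cancel₀ hs'.ne' (tendsto_nhds_unique h h'))

lemma isPlaneMean [IsFiniteMeasure μ] [l.NeBot] (hν : IsLimitMean μ M l ν) (hl : l ≤ atTop) {a : ℕ}
    (ha : μ {ω | ω 0 = a} ≠ 0) : IsPlaneMean (ν a) := by
  have hcyl {f : (Fin 2 → ℝ) → ℝ} (hf : IsBddMeasurable f) :=
    hν a f ha hf _ (measurableSet_eval_eq 0 a) subset_rfl
  refine ⟨fun {f g} hf hg => ?_, fun c {f} hf => ?_, ?_, fun {f} hf h0 => ?_⟩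
  · refine eq_of_tendsto ha (hcyl (hf.add hg)) ?_
    have h := (hcyl hf).add (hcyl hg)
    simp_rw [pastAvg_add hf hg,
      integral_add (integrable_pastAvg hf _) (integrable_pastAvg hg _)]
    rwa [← add_mul, ← mul_add] at h
  · refine eq_of_tendsto ha (hcyl (hf.const_mul c)) ?_
    have h := (hcyl hf).const_mul c
    simp_rw [pastAvg_const_mul, integral_const_mul]
    rwa [← mul_assoc, mul_left_comm] at h
  · refine eq_of_tendsto ha (hcyl .one) (tendsto_const_nhds.congr' ?_)
    filter_upwards [hl (eventually_ne_atTop 0)] with n hn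
    simp only [pastAvg_one hn, setIntegral_const, smul_eq_mul]
    ring
  · have h := ge_of_tendsto' (hcyl hf) fun n => integral_nonneg fun ω => pastAvg_nonneg h0 n ω
    have hs : 0 < μ.real {ω | ω 0 = a} := ENNReal.toReal_pos ha (measure_ne_top _ _)
    exact nonneg_of_mul_nonneg_right (nonneg_of_mul_nonneg_left h hs)
      measureReal_planeMeasure_univ_pos

lemma eq_comp_smul [IsFiniteMeasure μ] [l.NeBot] (hν : IsLimitMean μ M l ν)
    (hμ : MeasurePreserving shift μ μ) (hl : l ≤ atTop) {a b : ℕ}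
    (hab : μ {ω | ω 0 = a ∧ ω 1 = b} ≠ 0) (hφ : IsBddMeasurable φ) :
    ν b φ = ν a fun x => φ (M a b • x) := by
  have hs : MeasurableSet {ω : ℤ → ℕ | ω 0 = a ∧ ω 1 = b} :=
    (measurableSet_eval_eq 0 a).inter (measurableSet_eval_eq 1 b)
  have hs' : MeasurableSet {ω : ℤ → ℕ | ω (-1) = a ∧ ω 0 = b} :=
    (measurableSet_eval_eq (-1) a).inter (measurableSet_eval_eq 0 b)
  have hμs : μ {ω | ω 0 = a ∧ ω 1 = b} = μ {ω | ω (-1) = a ∧ ω 0 = b} := by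
    rw [← hμ.measure_preimage hs'.nullMeasurableSet]
    simp [shift]
  have ha : μ {ω | ω 0 = a} ≠ 0 := fun h => hab (measure_mono_null (fun _ h => h.1) h)
  have hb : μ {ω | ω 0 = b} ≠ 0 := fun h => hab (hμs ▸ measure_mono_null (fun _ h => h.2) h)
  have hlim := (hν a _ ha (hφ.comp_smul (M a b)) _ hs fun _ h => h.1).add
    ((tendsto_setIntegral_pastAvg_sub_comp_smul (M := M) hμ hφ a b).mono_left hl)
  simp only [add_sub_cancel, add_zero] at hlim
  refine eq_of_tendsto hab ?_ hlim
  rw [show μ.real {ω | ω 0 = a ∧ ω 1 = b} = _ from congrArg ENNReal.toReal hμs]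
  exact hν b φ hb hφ _ hs' fun _ h => h.2

end IsLimitMean

lemma exists_equivariant_planeMean [IsProbabilityMeasure μ] (hconc : ∀ᵐ ω ∂μ, ω ∈ SFT ℓ W)
    (hlps : LocalProductStructure ℓ W μ) (hμ : MeasurePreserving shift μ μ)
    (hF : ∀ a b, ‖M a b‖ ≤ F)
    (hlyap : Tendsto (fun n : ℕ => (1 / (n : ℝ)) * ∫ ω, log ‖pathProd M ω 0 n‖ ∂μ) atTop (𝓝 0)) :
    ∃ ν : ℕ → ((Fin 2 → ℝ) → ℝ) → ℝ,
      (∀ a, μ {ω | ω 0 = a} ≠ 0 → IsPlaneMean (ν a)) ∧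
      ∀ a b, μ {ω | ω 0 = a ∧ ω 1 = b} ≠ 0 → ∀ φ, IsBddMeasurable φ →
        ν b φ = ν a fun x => φ (M a b • x) := by
  obtain ⟨ν, hν⟩ := exists_isLimitMean hconc hlps hμ hF hlyap Nat.hyperfilter_le_atTop
  exact ⟨ν, fun a ha => hν.isPlaneMean Nat.hyperfilter_le_atTop ha,
    fun a b hab φ hφ => hν.eq_comp_smul hμ Nat.hyperfilter_le_atTop hab hφ⟩

end LimitMean

section TransferMatrix

open Polynomial

/-- The transfer matrix across the transition `a → b`, normalized to determinant one, as a
polynomial in the energy. Outside the alphabet `{1, …, ℓ}` it is replaced by `1`. -/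
noncomputable def transferPoly (ℓ a b : ℕ) : SL(2, ℝ[X]) :=
  if h : (1 ≤ a ∧ a ≤ ℓ) ∧ 1 ≤ b ∧ b ≤ ℓ then
    ⟨!![C (√((b : ℝ) / a) * (((b : ℝ) + a) / b)) * X, -C (√((b : ℝ) / a) * ((a : ℝ) / b));
        C √((b : ℝ) / a), 0], by
      have ha : (0 : ℝ) < a := by exact_mod_cast h.1.1
      have hb : (0 : ℝ) < b := by exact_mod_cast h.2.1
      rw [det_fin_two_of, mul_zero, zero_sub, neg_mul, neg_neg, ← C_mul, mul_right_comm,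
        mul_self_sqrt (by positivity), div_mul_div_cancel₀ ha.ne', div_self hb.ne', C_1]⟩
  else 1

/-- Evaluation at the energy `E` of a unimodular matrix with polynomial entries. -/
noncomputable def evalSL (E : ℝ) : SL(2, ℝ[X]) →* SL(2, ℝ) :=
  Matrix.SpecialLinearGroup.map (evalRingHom E)

/-- The normalized transfer matrix across the transition `a → b` at the energy `E`. -/
noncomputable def transfer (ℓ : ℕ) (E : ℝ) (a b : ℕ) : SL(2, ℝ) := evalSL E (transferPoly ℓ a b)

variable {ℓ : ℕ} {W : Set (ℕ × ℕ)}

lemma transferPoly_of_not {a b : ℕ} (h : ¬((1 ≤ a ∧ a ≤ ℓ) ∧ 1 ≤ b ∧ b ≤ ℓ)) :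
    transferPoly ℓ a b = 1 := dif_neg h

lemma evalSL_apply (E : ℝ) (g : SL(2, ℝ[X])) (i j : Fin 2) :
    evalSL E g i j = (g i j).eval E := rfl

lemma coe_transfer {a b : ℕ} (ha : 1 ≤ a ∧ a ≤ ℓ) (hb : 1 ≤ b ∧ b ≤ ℓ) (E : ℝ) :
    (transfer ℓ E a b : Matrix (Fin 2) (Fin 2) ℝ) =
      √((b : ℝ) / a) • !![((b : ℝ) + a) / b * E, -((a : ℝ) / b); 1, 0] := by
  have h : (transferPoly ℓ a b : Matrix (Fin 2) (Fin 2) ℝ[X]) = _ :=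
    congrArg Subtype.val (dif_pos ⟨ha, hb⟩)
  ext i j
  rw [transfer, evalSL_apply, h]
  fin_cases i <;> fin_cases j <;> simp [mul_assoc]

lemma exists_norm_transfer_le (ℓ : ℕ) (E : ℝ) : ∃ F, ∀ a b, ‖transfer ℓ E a b‖ ≤ F := by
  obtain ⟨F, hF⟩ := ((Finset.range (ℓ + 1) ×ˢ Finset.range (ℓ + 1)).image
    fun x => ‖transfer ℓ E x.1 x.2‖).bddAbove
  refine ⟨max F 1, fun a b => ?_⟩
  by_cases h : (1 ≤ a ∧ a ≤ ℓ) ∧ 1 ≤ b ∧ b ≤ ℓ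
  · refine le_max_of_le_left (hF (Finset.mem_image_of_mem (a := (a, b)) _ ?_))
    simp only [Finset.mem_product, Finset.mem_range]
    omega
  · rw [transfer, transferPoly_of_not h, map_one, norm_sl_one]
    exact le_max_right _ _

lemma AIter_eq_pathProd {ω : ℤ → ℕ} (hω : ω ∈ SFT ℓ W) (k : ℝ) (n : ℕ) :
    AIter k ω n = pathProd (transfer ℓ (Real.cos k)) ω (-1) n := by
  induction n with
  | zero => rfl
  | succ n ih =>
    have h : (-1 : ℤ) + n + 1 = 0 + n := by ring
    rw [AIter, pathProd, Matrix.SpecialLinearGroup.coe_mul, ih, coe_transfer (hω.1 _) (hω.1 _),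
      Acoc, shift_iterate_apply, shift_iterate_apply, h]

lemma tendsto_integral_log_norm_pathProd {μ : Measure (ℤ → ℕ)} [IsProbabilityMeasure μ]
    (hconc : ∀ᵐ ω ∂μ, ω ∈ SFT ℓ W) (hμ : MeasurePreserving shift μ μ) {k : ℝ}
    (hk : Tendsto (fun n : ℕ => (1 / (n : ℝ)) * ∫ ω, log ‖AIter k ω n‖ ∂μ) atTop (𝓝 0)) :
    Tendsto (fun n : ℕ => (1 / (n : ℝ)) *
      ∫ ω, log ‖pathProd (transfer ℓ (Real.cos k)) ω 0 n‖ ∂μ) atTop (𝓝 0) := by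
  obtain ⟨F, hF⟩ := exists_norm_transfer_le ℓ (Real.cos k)
  refine hk.congr fun n => ?_
  congr 1
  calc ∫ ω, log ‖AIter k ω n‖ ∂μ
      = ∫ ω, log ‖pathProd (transfer ℓ (Real.cos k)) ω (-1) n‖ ∂μ := by
        refine integral_congr_ae ?_
        filter_upwards [hconc] with ω hω
        rw [AIter_eq_pathProd hω, norm_sl_def]
    _ = ∫ ω, log ‖pathProd (transfer ℓ (Real.cos k)) (shift ω) (-1) n‖ ∂μ :=
        (integral_comp_of_measurePreserving hμ (integrable_log_norm_pathProd hF _ n).1).symm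
    _ = ∫ ω, log ‖pathProd (transfer ℓ (Real.cos k)) ω 0 n‖ ∂μ := by
        refine integral_congr_ae (.of_forall fun ω => ?_)
        have h := pathProd_shift_iterate (M := transfer ℓ (Real.cos k)) 1 ω (-1) n
        rw [Function.iterate_one] at h
        simp only [h]
        norm_num

end TransferMatrix

section QuadForm

/-- The binary quadratic form `c₀ x² + c₁ xy + c₂ y²`. -/
def quadForm (c : Fin 3 → ℝ) (x : Fin 2 → ℝ) : ℝ :=
  c 0 * x 0 ^ 2 + c 1 * (x 0 * x 1) + c 2 * x 1 ^ 2

/-- The determinant `4 c₀ c₂ - c₁²` of a binary quadratic form (minus its discriminant). -/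
def quadDet (c : Fin 3 → ℝ) : ℝ := 4 * (c 0 * c 2) - c 1 ^ 2

/-- The coefficients of the quadratic form `x ↦ quadForm c (g • x)`. -/
def quadPullback (g : SL(2, ℝ)) (c : Fin 3 → ℝ) : Fin 3 → ℝ :=
  ![c 0 * g 0 0 ^ 2 + c 1 * (g 0 0 * g 1 0) + c 2 * g 1 0 ^ 2,
    2 * c 0 * g 0 0 * g 0 1 + c 1 * (g 0 0 * g 1 1 + g 0 1 * g 1 0) + 2 * c 2 * g 1 0 * g 1 1,
    c 0 * g 0 1 ^ 2 + c 1 * (g 0 1 * g 1 1) + c 2 * g 1 1 ^ 2]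

/-- The transfer matrix at the energy `E` across a transition from a letter to itself. -/
def freeStep (E : ℝ) : SL(2, ℝ) := ⟨!![2 * E, -1; 1, 0], by simp [det_fin_two_of]⟩

/-- The coefficients of the quadratic form preserved by `freeStep E`. -/
def freeCoeff (E : ℝ) : Fin 3 → ℝ := ![1, -(2 * E), 1]

/-- The trace of a quadratic form relative to the form preserved by `freeStep E`, up to a factor
depending only on `E`. -/
def freeTrace (E : ℝ) (c : Fin 3 → ℝ) : ℝ := c 0 + E * c 1 + c 2

/-- The coefficients of half the Jacobian determinant of a quadratic form and the form preserved by
`freeStep E`. -/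
def freeJacobian (E : ℝ) (c : Fin 3 → ℝ) : Fin 3 → ℝ :=
  ![-(2 * c 0 * E + c 1), 2 * (c 0 - c 2), c 1 + 2 * E * c 2]

/-- The quadratic form preserved by `freeStep E`. -/
def freeForm (E : ℝ) : (Fin 2 → ℝ) → ℝ := quadForm (freeCoeff E)

lemma freeForm_apply (E : ℝ) (x : Fin 2 → ℝ) :
    freeForm E x = x 0 ^ 2 - 2 * E * (x 0 * x 1) + x 1 ^ 2 := by
  simp only [freeForm, quadForm, freeCoeff, cons_val_zero, cons_val_one, cons_val]
  ring

lemma sl_smul_apply (g : SL(2, ℝ)) (x : Fin 2 → ℝ) (i : Fin 2) :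
    (g • x) i = g i 0 * x 0 + g i 1 * x 1 := by
  simp [Matrix.SpecialLinearGroup.smul_def, mulVec, dotProduct, Fin.sum_univ_two]

lemma freeStep_smul (E : ℝ) (x : Fin 2 → ℝ) :
    freeStep E • x = ![2 * E * x 0 - x 1, x 0] := by
  ext i
  rw [sl_smul_apply]
  fin_cases i <;> simp [freeStep, sub_eq_add_neg]

lemma quadForm_smul (c : Fin 3 → ℝ) (g : SL(2, ℝ)) (x : Fin 2 → ℝ) :
    quadForm c (g • x) = quadForm (quadPullback g c) x := by
  simp only [quadForm, quadPullback, sl_smul_apply, cons_val_zero, cons_val_one, cons_val]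
  ring

lemma freeForm_freeStep_smul (E : ℝ) (x : Fin 2 → ℝ) :
    freeForm E (freeStep E • x) = freeForm E x := by
  rw [freeForm_apply, freeForm_apply, freeStep_smul, cons_val_zero, cons_val_one, cons_val_zero]
  ring

lemma sl_mul_sub_mul_eq_one (g : SL(2, ℝ)) : g 0 0 * g 1 1 - g 0 1 * g 1 0 = 1 := by
  rw [← det_fin_two, g.det_coe]

lemma quadDet_quadPullback (g : SL(2, ℝ)) (c : Fin 3 → ℝ) :
    quadDet (quadPullback g c) = quadDet c := by
  have h : quadDet (quadPullback g c) =
      quadDet c * (g 0 0 * g 1 1 - g 0 1 * g 1 0) ^ 2 := by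
    simp only [quadDet, quadPullback, cons_val_zero, cons_val_one, cons_val]
    ring
  rw [h, sl_mul_sub_mul_eq_one, one_pow, mul_one]

lemma quadDet_freeCoeff (E : ℝ) : quadDet (freeCoeff E) = 4 * (1 - E ^ 2) := by
  simp only [quadDet, freeCoeff, cons_val_zero, cons_val_one, cons_val]
  ring

lemma freeTrace_quadPullback_inv (g : SL(2, ℝ)) (E : ℝ) :
    freeTrace E (quadPullback g⁻¹ (freeCoeff E)) = freeTrace E (quadPullback g (freeCoeff E)) := by
  simp only [freeTrace, quadPullback, freeCoeff, Matrix.SpecialLinearGroup.coe_inv,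
    adjugate_fin_two, of_apply, cons_val', cons_val_zero, cons_val_one, cons_val,
    cons_val_fin_one]
  ring

lemma freeTrace_freeJacobian (E : ℝ) (c : Fin 3 → ℝ) : freeTrace E (freeJacobian E c) = 0 := by
  simp only [freeTrace, freeJacobian, cons_val_zero, cons_val_one, cons_val]
  ring

-- The classical syzygy between two binary quadratic forms and their Jacobian.
lemma quadForm_freeJacobian_sq (E : ℝ) (c : Fin 3 → ℝ) (x : Fin 2 → ℝ) :
    quadForm (freeJacobian E c) x ^ 2 = 4 * freeTrace E c * (quadForm c x * freeForm E x) -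
      4 * (1 - E ^ 2) * quadForm c x ^ 2 - quadDet c * freeForm E x ^ 2 := by
  simp only [freeForm_apply, quadForm, freeTrace, freeJacobian, quadDet, cons_val_zero,
    cons_val_one, cons_val]
  ring

lemma eq_freeCoeff_of_freeJacobian_eq_zero {E : ℝ} (hE : E ^ 2 < 1) {c : Fin 3 → ℝ}
    (hJ : freeJacobian E c = 0) (hdet : quadDet c = 4 * (1 - E ^ 2)) (hc : 0 ≤ c 0) :
    c = freeCoeff E := by
  have h1 : -(2 * c 0 * E + c 1) = 0 := congrFun hJ 0
  have h2 : 2 * (c 0 - c 2) = 0 := congrFun hJ 1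
  have hc1 : c 1 = -(2 * E * c 0) := by linarith
  have hc2 : c 2 = c 0 := by linarith
  have hsq : c 0 ^ 2 = 1 := by
    rw [quadDet, hc1, hc2] at hdet
    exact mul_left_cancel₀ (sub_pos.2 hE).ne' (by linarith)
  have hc0 : c 0 = 1 := (sq_eq_sq₀ hc zero_le_one).1 (by rw [hsq, one_pow])
  ext i
  fin_cases i <;> simp [freeCoeff, hc1, hc2, hc0]

lemma eq_zero_of_freeTrace_eq_zero {E : ℝ} (hE : E ^ 2 < 1) {n : Fin 3 → ℝ}
    (htr : freeTrace E n = 0) (hdet : 0 ≤ quadDet n) : n = 0 := by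
  unfold freeTrace at htr
  unfold quadDet at hdet
  have hsum : n 0 + n 2 = -(E * n 1) := by linarith
  have h1 : (1 - E ^ 2) * n 1 ^ 2 + (n 0 - n 2) ^ 2 ≤ 0 := by
    have : (n 0 + n 2) ^ 2 = (E * n 1) ^ 2 := by rw [hsum, neg_sq]
    linarith
  have h2 := mul_nonneg (sub_nonneg.2 hE.le) (sq_nonneg (n 1))
  have hn1 : n 1 = 0 := pow_eq_zero_iff two_ne_zero |>.1
    (mul_left_cancel₀ (sub_pos.2 hE).ne' (by linarith [sq_nonneg (n 0 - n 2)]))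
  have hsub : n 0 - n 2 = 0 := pow_eq_zero_iff two_ne_zero |>.1
    (by linarith [sq_nonneg (n 0 - n 2)])
  rw [hn1, mul_zero, neg_zero] at hsum
  ext i
  fin_cases i
  · change n 0 = 0
    linarith
  · exact hn1
  · change n 2 = 0
    linarith

lemma neg_quadDet_mul_freeForm_sq_le {E : ℝ} (hE : E ^ 2 < 1) {n : Fin 3 → ℝ}
    (htr : freeTrace E n = 0) (x : Fin 2 → ℝ) :
    E ^ 2 * -quadDet n * freeForm E x ^ 2 ≤
      2 * (quadForm n x ^ 2 + quadForm n (freeStep E • x) ^ 2) := by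
  have hid : E ^ 2 * -quadDet n * freeForm E x ^ 2 =
      quadForm n x ^ 2 + quadForm n (freeStep E • x) ^ 2 -
        2 * (2 * E ^ 2 - 1) * (quadForm n x * quadForm n (freeStep E • x)) := by
    have hn2 : n 2 = -n 0 - E * n 1 := by
      unfold freeTrace at htr
      linarith
    simp only [freeForm_apply, freeStep_smul, quadForm, quadDet, hn2, cons_val_zero, cons_val_one]
    ring
  rw [hid]
  nlinarith [mul_nonneg (sq_nonneg E)
      (sq_nonneg (quadForm n x + quadForm n (freeStep E • x))),
    mul_nonneg (sub_nonneg.2 hE.le) (sq_nonneg (quadForm n x - quadForm n (freeStep E • x)))]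

lemma le_freeForm (E : ℝ) (x : Fin 2 → ℝ) :
    (1 - |E|) * (x 0 ^ 2 + x 1 ^ 2) ≤ freeForm E x := by
  rw [freeForm_apply]
  rcases abs_cases E with ⟨h, h'⟩ | ⟨h, h'⟩ <;> rw [h]
  · nlinarith [mul_nonneg h' (sq_nonneg (x 0 - x 1))]
  · nlinarith [mul_nonneg (neg_nonneg.2 h'.le) (sq_nonneg (x 0 + x 1))]

lemma freeForm_pos {E : ℝ} (hE : E ^ 2 < 1) {x : Fin 2 → ℝ} (hx : x ≠ 0) : 0 < freeForm E x := by
  have hE1 : |E| < 1 := (sq_lt_one_iff_abs_lt_one E).1 hE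
  refine (mul_pos (sub_pos.2 hE1) ?_).trans_le (le_freeForm E x)
  by_contra! h
  refine hx (funext fun i => ?_)
  fin_cases i <;> simp <;> nlinarith [sq_nonneg (x 0), sq_nonneg (x 1)]

lemma abs_quadForm_le (c : Fin 3 → ℝ) (x : Fin 2 → ℝ) :
    |quadForm c x| ≤ (|c 0| + |c 1| + |c 2|) * (x 0 ^ 2 + x 1 ^ 2) := by
  have h01 : |x 0 * x 1| ≤ x 0 ^ 2 + x 1 ^ 2 := by
    rw [abs_le]
    constructor <;> nlinarith [sq_nonneg (x 0 - x 1), sq_nonneg (x 0 + x 1)]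
  calc |quadForm c x| ≤ |c 0 * x 0 ^ 2| + |c 1 * (x 0 * x 1)| + |c 2 * x 1 ^ 2| :=
        abs_add_three _ _ _
    _ = |c 0| * x 0 ^ 2 + |c 1| * |x 0 * x 1| + |c 2| * x 1 ^ 2 := by
        simp only [abs_mul, abs_pow, sq_abs]
    _ ≤ |c 0| * (x 0 ^ 2 + x 1 ^ 2) + |c 1| * (x 0 ^ 2 + x 1 ^ 2) +
          |c 2| * (x 0 ^ 2 + x 1 ^ 2) := by
        gcongr
        · exact le_add_of_nonneg_right (sq_nonneg _)
        · exact le_add_of_nonneg_left (sq_nonneg _)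
    _ = _ := by ring

end QuadForm

section Rigidity

lemma IsBddMeasurable.pow {f : (Fin 2 → ℝ) → ℝ} (hf : IsBddMeasurable f) (n : ℕ) :
    IsBddMeasurable fun x => f x ^ n := by
  obtain ⟨hf, C, hC⟩ := hf
  exact ⟨hf.pow_const n, C ^ n, fun x =>
    (abs_pow _ _).trans_le (pow_le_pow_left₀ (abs_nonneg _) (hC x) n)⟩

lemma isBddMeasurable_quadForm_div {E : ℝ} (hE : E ^ 2 < 1) (c : Fin 3 → ℝ) :
    IsBddMeasurable fun x => quadForm c x / freeForm E x := by
  have hm : ∀ c, Measurable (quadForm c) := fun c => by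
    unfold quadForm
    fun_prop
  refine ⟨(hm c).div (hm _), (|c 0| + |c 1| + |c 2|) / (1 - |E|), fun x => ?_⟩
  have hE1 : 0 < 1 - |E| := sub_pos.2 ((sq_lt_one_iff_abs_lt_one E).1 hE)
  by_cases hx : x = 0
  · simp only [hx, quadForm, Pi.zero_apply, zero_pow two_ne_zero, mul_zero, add_zero, zero_div,
      abs_zero]
    positivity
  have hpos := freeForm_pos hE hx
  rw [abs_div, abs_of_pos hpos, div_le_div_iff₀ hpos hE1]
  calc |quadForm c x| * (1 - |E|)
      ≤ (|c 0| + |c 1| + |c 2|) * (x 0 ^ 2 + x 1 ^ 2) * (1 - |E|) := by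
        gcongr
        exact abs_quadForm_le c x
    _ = (|c 0| + |c 1| + |c 2|) * ((1 - |E|) * (x 0 ^ 2 + x 1 ^ 2)) := by ring
    _ ≤ _ := by
        gcongr
        exact le_freeForm E x

namespace IsPlaneMean

variable {ν : ((Fin 2 → ℝ) → ℝ) → ℝ} {E : ℝ}

lemma mono (hν : IsPlaneMean ν) {f g : (Fin 2 → ℝ) → ℝ} (hf : IsBddMeasurable f)
    (hg : IsBddMeasurable g) (h : ∀ x, x ≠ 0 → f x ≤ g x) : ν f ≤ ν g := by
  have h1 := hν.nonneg (hg.add (hf.const_mul (-1))) fun x hx => by linarith [h x hx]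
  rw [hν.add hg (hf.const_mul (-1)), hν.const_mul _ hf] at h1
  linarith

lemma congr (hν : IsPlaneMean ν) {f g : (Fin 2 → ℝ) → ℝ} (hf : IsBddMeasurable f)
    (hg : IsBddMeasurable g) (h : ∀ x, x ≠ 0 → f x = g x) : ν f = ν g :=
  le_antisymm (hν.mono hf hg fun x hx => (h x hx).le) (hν.mono hg hf fun x hx => (h x hx).ge)

lemma quadForm_div_eq (hν : IsPlaneMean ν) (hE : E ^ 2 < 1) (c : Fin 3 → ℝ) :
    ν (fun x => quadForm c x / freeForm E x) =
      c 0 * ν (fun x => quadForm ![1, 0, 0] x / freeForm E x) +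
      c 1 * ν (fun x => quadForm ![0, 1, 0] x / freeForm E x) +
      c 2 * ν (fun x => quadForm ![0, 0, 1] x / freeForm E x) := by
  have hb := isBddMeasurable_quadForm_div hE
  rw [← hν.const_mul _ (hb _), ← hν.const_mul _ (hb _), ← hν.const_mul _ (hb _),
    ← hν.add ((hb _).const_mul _) ((hb _).const_mul _),
    ← hν.add (((hb _).const_mul _).add ((hb _).const_mul _)) ((hb _).const_mul _)]
  congr 1
  ext x
  simp only [quadForm, cons_val_zero, cons_val_one, cons_val]
  ring

-- Invariance under `freeStep E` and normalization are three linear equations for the three second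
-- moments; they are independent because `E ≠ 0`.
lemma two_mul_quadForm_div (hν : IsPlaneMean ν) (hE : E ^ 2 < 1) (hE0 : E ≠ 0)
    (hR : ∀ φ, IsBddMeasurable φ → ν φ = ν fun x => φ (freeStep E • x)) (c : Fin 3 → ℝ) :
    2 * (1 - E ^ 2) * ν (fun x => quadForm c x / freeForm E x) = freeTrace E c := by
  have hb := isBddMeasurable_quadForm_div hE
  have hone : ν (fun x => quadForm (freeCoeff E) x / freeForm E x) = 1 :=
    (hν.congr (hb _) .one fun x hx => div_self (freeForm_pos hE hx).ne').trans hν.one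
  have hinv : ∀ c, ν (fun x => quadForm c x / freeForm E x) =
      ν fun x => quadForm (quadPullback (freeStep E) c) x / freeForm E x := fun c => by
    simp only [hR _ (hb c), freeForm_freeStep_smul, quadForm_smul]
  have h1 := hinv ![1, 0, 0]
  have h2 := hinv ![0, 0, 1]
  rw [hν.quadForm_div_eq hE (quadPullback _ _)] at h1 h2
  rw [hν.quadForm_div_eq hE] at hone ⊢
  simp only [quadPullback, freeStep, freeCoeff, of_apply, cons_val', cons_val_zero, cons_val_one,
    cons_val, cons_val_fin_one] at h1 h2 hone
  set m₀ := ν fun x => quadForm ![1, 0, 0] x / freeForm E x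
  set m₁ := ν fun x => quadForm ![0, 1, 0] x / freeForm E x
  set m₂ := ν fun x => quadForm ![0, 0, 1] x / freeForm E x
  have h20 : m₂ = m₀ := by linarith
  have h10 : m₁ = E * m₀ := mul_left_cancel₀ hE0 (by linarith)
  rw [h10, h20] at hone ⊢
  rw [freeTrace]
  linear_combination (c 0 + E * c 1 + c 2) * hone

lemma eq_zero_of_quadForm_sq_nonpos (hν : IsPlaneMean ν) (hE : E ^ 2 < 1) (hE0 : E ≠ 0)
    (hR : ∀ φ, IsBddMeasurable φ → ν φ = ν fun x => φ (freeStep E • x)) {n : Fin 3 → ℝ}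
    (htr : freeTrace E n = 0) (hn : ν (fun x => (quadForm n x / freeForm E x) ^ 2) ≤ 0) :
    n = 0 := by
  refine eq_zero_of_freeTrace_eq_zero hE htr ?_
  have hb := (isBddMeasurable_quadForm_div hE n).pow 2
  have hbR := hb.comp_smul (freeStep E)
  have h := hν.mono (IsBddMeasurable.one.const_mul (E ^ 2 * -quadDet n))
    ((hb.add hbR).const_mul 2) fun x hx => by
      have hpos := freeForm_pos hE hx
      rw [freeForm_freeStep_smul, div_pow, div_pow, ← add_div, mul_one, mul_div_assoc',
        le_div_iff₀ (by positivity)]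
      exact neg_quadDet_mul_freeForm_sq_le hE htr x
  rw [hν.const_mul _ .one, hν.one, hν.const_mul _ (hb.add hbR), hν.add hb hbR, ← hR _ hb] at h
  have hE2 : 0 < E ^ 2 := by positivity
  by_contra! hneg
  linarith [mul_pos hE2 (neg_pos.2 hneg)]

lemma freeJacobian_sq_nonpos (hν : IsPlaneMean ν) (hE : E ^ 2 < 1) {c : Fin 3 → ℝ}
    (hdet : quadDet c = 4 * (1 - E ^ 2)) (hpos : ∀ x, x ≠ 0 → 0 < quadForm c x)
    (hb : IsBddMeasurable fun x => freeForm E x / quadForm c x)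
    (h1 : 2 * (1 - E ^ 2) * ν (fun x => quadForm c x / freeForm E x) = freeTrace E c)
    (h2 : 2 * (1 - E ^ 2) * ν (fun x => freeForm E x / quadForm c x) = freeTrace E c) :
    ν (fun x => (quadForm (freeJacobian E c) x / freeForm E x) ^ 2) ≤ 0 := by
  have hb' := isBddMeasurable_quadForm_div hE c
  have hsum := IsBddMeasurable.one.const_mul (4 * freeTrace E c) |>.add
    ((hb'.add hb).const_mul (-(4 * (1 - E ^ 2))))
  obtain ⟨K, hK⟩ := hb'.2
  have hle := hν.mono ((isBddMeasurable_quadForm_div hE (freeJacobian E c)).pow 2)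
    (hsum.const_mul K) fun x hx => by
      have hQ := freeForm_pos hE hx
      have hP := hpos x hx
      have hsyz : 4 * freeTrace E c * 1 + -(4 * (1 - E ^ 2)) *
          (quadForm c x / freeForm E x + freeForm E x / quadForm c x) =
          quadForm (freeJacobian E c) x ^ 2 / (freeForm E x * quadForm c x) := by
        rw [quadForm_freeJacobian_sq, hdet]
        field_simp
        ring
      rw [hsyz]
      calc (quadForm (freeJacobian E c) x / freeForm E x) ^ 2
          = quadForm c x / freeForm E x *
              (quadForm (freeJacobian E c) x ^ 2 / (freeForm E x * quadForm c x)) := by field_simp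
        _ ≤ _ := mul_le_mul_of_nonneg_right (le_of_abs_le (hK x)) (by positivity)
  refine hle.trans_eq ?_
  rw [hν.const_mul _ hsum, hν.add (.const_mul _ .one) ((hb'.add hb).const_mul _),
    hν.const_mul _ .one, hν.one, hν.const_mul _ (hb'.add hb), hν.add hb' hb]
  linear_combination (-2 * K) * h1 - 2 * K * h2

theorem freeForm_smul_eq (hν : IsPlaneMean ν) (hE : E ^ 2 < 1) (hE0 : E ≠ 0)
    (hR : ∀ φ, IsBddMeasurable φ → ν φ = ν fun x => φ (freeStep E • x)) {g : SL(2, ℝ)}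
    (hg : ∀ φ, IsBddMeasurable φ → ν φ = ν fun x => φ (g • x)) (x : Fin 2 → ℝ) :
    freeForm E (g • x) = freeForm E x := by
  have hform : ∀ x, freeForm E (g • x) = quadForm (quadPullback g (freeCoeff E)) x :=
    quadForm_smul _ g
  have hinv : ∀ x, quadForm (quadPullback g⁻¹ (freeCoeff E)) (g • x) = freeForm E x := fun x => by
    rw [← quadForm_smul, inv_smul_smul, freeForm]
  have hpos : ∀ x, x ≠ 0 → 0 < quadForm (quadPullback g (freeCoeff E)) x := fun x hx =>
    hform x ▸ freeForm_pos hE ((smul_ne_zero_iff_ne g).2 hx)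
  have hdet := (quadDet_quadPullback g (freeCoeff E)).trans (quadDet_freeCoeff E)
  have hb := isBddMeasurable_quadForm_div hE (quadPullback g⁻¹ (freeCoeff E))
  have hmean := hν.two_mul_quadForm_div hE hE0 hR (quadPullback g⁻¹ (freeCoeff E))
  rw [hg _ hb, freeTrace_quadPullback_inv] at hmean
  have hbg := hb.comp_smul g
  simp only [hinv, hform] at hmean hbg
  have hJ := hν.eq_zero_of_quadForm_sq_nonpos hE hE0 hR (freeTrace_freeJacobian E _)
    (hν.freeJacobian_sq_nonpos hE hdet hpos hbg (hν.two_mul_quadForm_div hE hE0 hR _) hmean)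
  have hc0 := hpos ![1, 0] fun h => one_ne_zero (congrFun h 0)
  rw [hform, eq_freeCoeff_of_freeJacobian_eq_zero hE hJ hdet (by simpa [quadForm] using hc0.le),
    freeForm]

end IsPlaneMean

end Rigidity

section Paths

/-- `IsPathProd M r a b g`: the element `g` is the ordered product of the weights `M` along some
path from `a` to `b` in the directed graph of the relation `r`. -/
inductive IsPathProd {G : Type*} [Monoid G] (M : ℕ → ℕ → G) (r : ℕ → ℕ → Prop) (a : ℕ) :
    ℕ → G → Prop
  | refl : IsPathProd M r a a 1
  | step {b c : ℕ} {g : G} : IsPathProd M r a b g → r b c → IsPathProd M r a c (M b c * g)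

namespace IsPathProd

variable {G : Type*} [Monoid G] {M : ℕ → ℕ → G} {r : ℕ → ℕ → Prop} {a b c : ℕ} {g h : G}

lemma trans (hg : IsPathProd M r a b g) (hh : IsPathProd M r b c h) :
    IsPathProd M r a c (h * g) := by
  induction hh with
  | refl => rwa [one_mul]
  | step _ he ih =>
    rw [mul_assoc]
    exact ih.step he

lemma map {G' : Type*} [Monoid G'] (f : G →* G') (hg : IsPathProd M r a b g) :
    IsPathProd (fun i j => f (M i j)) r a b (f g) := by
  induction hg with
  | refl =>
    rw [map_one]
    exact .refl
  | step _ he ih =>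
    rw [map_mul]
    exact ih.step he

lemma pathProd_mul {p : ℤ → ℕ} (hp : ∀ n : ℤ, r (p n) (p (n + 1)))
    (hg : IsPathProd M r a (p 0) g) (n : ℕ) :
    IsPathProd M r a (p n) (pathProd M p 0 n * g) := by
  induction n with
  | zero => rwa [pathProd, one_mul, Nat.cast_zero]
  | succ n ih =>
    rw [pathProd, mul_assoc, zero_add, Nat.cast_add_one]
    exact ih.step (hp n)

lemma mean_eq {M : ℕ → ℕ → SL(2, ℝ)} {g : SL(2, ℝ)} {ν : ℕ → ((Fin 2 → ℝ) → ℝ) → ℝ}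
    (hν : ∀ i j, r i j → ∀ φ, IsBddMeasurable φ → ν j φ = ν i fun x => φ (M i j • x))
    (hg : IsPathProd M r a b g) {φ : (Fin 2 → ℝ) → ℝ} (hφ : IsBddMeasurable φ) :
    ν b φ = ν a fun x => φ (g • x) := by
  induction hg generalizing φ with
  | refl => simp only [one_smul]
  | @step b c g _ he ih =>
    rw [hν b c he φ hφ, ih (hφ.comp_smul _)]
    simp only [mul_smul]

end IsPathProd

end Paths

section Connectivity

/-- The transition `a → b` has positive probability. -/
def PosEdge (μ : Measure (ℤ → ℕ)) (a b : ℕ) : Prop := μ {ω | ω 0 = a ∧ ω 1 = b} ≠ 0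

variable {μ : Measure (ℤ → ℕ)}

lemma PosEdge.measure_letter_ne_zero {a b : ℕ} (h : PosEdge μ a b) : μ {ω | ω 0 = a} ≠ 0 :=
  fun h0 => h (measure_mono_null (fun _ hω => hω.1) h0)

lemma PosEdge.letters {ℓ : ℕ} {W : Set (ℕ × ℕ)} (hconc : ∀ᵐ ω ∂μ, ω ∈ SFT ℓ W) {a b : ℕ}
    (h : PosEdge μ a b) : (1 ≤ a ∧ a ≤ ℓ) ∧ 1 ≤ b ∧ b ≤ ℓ := by
  by_contra hn
  refine h (measure_eq_zero_iff_ae_notMem.2 ?_)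
  filter_upwards [hconc] with ω hS hω
  rw [← hω.1, ← hω.2] at hn
  exact hn ⟨hS.1 0, hS.1 1⟩

lemma posEdge_of_mem {ℓ : ℕ} {W : Set (ℕ × ℕ)} (hsupp : FullSupport ℓ W μ) {p : ℤ → ℕ}
    (hp : p ∈ SFT ℓ W) (n : ℤ) : PosEdge μ (p n) (p (n + 1)) := by
  refine (hsupp {ω | ω 0 = p n ∧ ω 1 = p (n + 1)} ?_ ⟨fun m => p (m + n),
    ⟨by simp only [zero_add], by simp only [add_comm]⟩, fun m => hp.1 _, fun m => ?_⟩).ne'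
  · exact ((isOpen_discrete {p n}).preimage (continuous_apply (A := fun _ : ℤ => ℕ) 0)).inter
      ((isOpen_discrete {p (n + 1)}).preimage (continuous_apply (A := fun _ : ℤ => ℕ) 1))
  · have h := hp.2 (m + n)
    rwa [add_right_comm] at h

lemma ae_posEdge : ∀ᵐ ω ∂μ, PosEdge μ (ω 0) (ω 1) := by
  have h : ∀ x : ℕ × ℕ, ∀ᵐ ω ∂μ, ω 0 = x.1 ∧ ω 1 = x.2 → PosEdge μ x.1 x.2 := fun x => by
    by_cases hx : PosEdge μ x.1 x.2
    · exact ae_of_all _ fun _ _ => hx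
    · filter_upwards [measure_eq_zero_iff_ae_notMem.1 (not_not.1 hx)] with ω hω hω'
      exact absurd hω' hω
  filter_upwards [ae_all_iff.2 h] with ω hω
  exact hω (ω 0, ω 1) ⟨rfl, rfl⟩

lemma measurableSet_letter (P : ℕ → Prop) : MeasurableSet {ω : ℤ → ℕ | P (ω 0)} :=
  (measurable_pi_apply (X := fun _ : ℤ => ℕ) 0) (MeasurableSet.of_discrete (s := {a | P a}))

lemma letter_of_ae_empty_or_univ {P : ℕ → Prop} {a b : ℕ} (ha : μ {ω | ω 0 = a} ≠ 0)
    (hb : μ {ω | ω 0 = b} ≠ 0) (hPa : P a)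
    (h : {ω : ℤ → ℕ | P (ω 0)} =ᵐ[μ] (∅ : Set (ℤ → ℕ)) ∨
      {ω : ℤ → ℕ | P (ω 0)} =ᵐ[μ] (univ : Set (ℤ → ℕ))) : P b := by
  rcases h with h | h
  · refine absurd (measure_mono_null (fun ω hω => ?_) (ae_eq_empty.1 h)) ha
    exact (congrArg P hω).mpr hPa
  · by_contra hn
    refine hb (measure_mono_null (fun ω hω => ?_) (ae_eq_univ.1 h))
    exact fun hω' => hn ((congrArg P hω).mp hω')

variable [IsProbabilityMeasure μ] {G : Type*} [Monoid G]

lemma exists_isPathProd (herg : Ergodic shift μ) (M : ℕ → ℕ → G) {a b : ℕ}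
    (ha : μ {ω | ω 0 = a} ≠ 0) (hb : μ {ω | ω 0 = b} ≠ 0) :
    ∃ g, IsPathProd M (PosEdge μ) a b g := by
  refine letter_of_ae_empty_or_univ (P := fun b => ∃ g, IsPathProd M (PosEdge μ) a b g) ha hb
    ⟨1, .refl⟩ (herg.ae_empty_or_univ_of_ae_le_preimage
      (measurableSet_letter fun b => ∃ g, IsPathProd M (PosEdge μ) a b g).nullMeasurableSet ?_)
  filter_upwards [ae_posEdge (μ := μ)] with ω hω hS
  obtain ⟨g, hg⟩ := hS
  exact ⟨_, hg.step hω⟩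

end Connectivity

section Loops

open Polynomial

variable {ℓ : ℕ} {W : Set (ℕ × ℕ)} {μ : Measure (ℤ → ℕ)} [IsProbabilityMeasure μ]

lemma transfer_self {j : ℕ} (hj : 1 ≤ j ∧ j ≤ ℓ) (E : ℝ) : transfer ℓ E j j = freeStep E := by
  have hj0 : (j : ℝ) ≠ 0 := Nat.cast_ne_zero.2 (Nat.one_le_iff_ne_zero.1 hj.1)
  apply Subtype.ext
  rw [coe_transfer hj hj, div_self hj0, sqrt_one, one_smul, add_div, div_self hj0,
    one_add_one_eq_two]
  rfl

lemma freeForm_loop_of_lyapunov (hconc : ∀ᵐ ω ∂μ, ω ∈ SFT ℓ W)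
    (hμ : MeasurePreserving shift μ μ) (hlps : LocalProductStructure ℓ W μ) {k : ℝ}
    (hk : Tendsto (fun n : ℕ => (1 / (n : ℝ)) * ∫ ω, log ‖AIter k ω n‖ ∂μ) atTop (𝓝 0))
    (hE : Real.cos k ^ 2 < 1) (hE0 : Real.cos k ≠ 0) {j : ℕ} (hj : PosEdge μ j j)
    {g : SL(2, ℝ[X])} (hg : IsPathProd (transferPoly ℓ) (PosEdge μ) j j g) (x : Fin 2 → ℝ) :
    freeForm (Real.cos k) (evalSL (Real.cos k) g • x) = freeForm (Real.cos k) x := by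
  obtain ⟨F, hF⟩ := exists_norm_transfer_le ℓ (Real.cos k)
  obtain ⟨ν, hν, hinv⟩ := exists_equivariant_planeMean hconc hlps hμ hF
    (tendsto_integral_log_norm_pathProd hconc hμ hk)
  refine (hν j hj.measure_letter_ne_zero).freeForm_smul_eq hE hE0 (fun φ hφ => ?_)
    (fun φ hφ => (hg.map (evalSL _)).mean_eq hinv hφ) x
  rw [hinv j j hj φ hφ, transfer_self (hj.letters hconc).1]

lemma freeForm_evalSL_smul_of_infinite {g : SL(2, ℝ[X])} {x : Fin 2 → ℝ}
    (h : {E | freeForm E (evalSL E g • x) = freeForm E x}.Infinite) (E : ℝ) :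
    freeForm E (evalSL E g • x) = freeForm E x := by
  let y : Fin 2 → ℝ[X] := fun i => g i 0 * C (x 0) + g i 1 * C (x 1)
  have hy : ∀ E, freeForm E (evalSL E g • x) =
      (y 0 ^ 2 - 2 * X * (y 0 * y 1) + y 1 ^ 2).eval E := fun E => by
    simp [freeForm_apply, sl_smul_apply, evalSL_apply, y]
  have hx : ∀ E, freeForm E x = (C (x 0) ^ 2 - 2 * X * (C (x 0) * C (x 1)) + C (x 1) ^ 2).eval E :=
    fun E => by simp [freeForm_apply]
  simp only [hy, hx] at h ⊢
  rw [eq_of_infinite_eval_eq _ _ h]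

lemma freeForm_loop (hconc : ∀ᵐ ω ∂μ, ω ∈ SFT ℓ W) (hμ : MeasurePreserving shift μ μ)
    (hlps : LocalProductStructure ℓ W μ)
    (hinf : {k ∈ Icc (0 : ℝ) π | Tendsto (fun n : ℕ => (1 / (n : ℝ)) *
      ∫ ω, Real.log ‖AIter k ω n‖ ∂μ) atTop (𝓝 0)}.Infinite) {j : ℕ} (hj : PosEdge μ j j)
    {g : SL(2, ℝ[X])} (hg : IsPathProd (transferPoly ℓ) (PosEdge μ) j j g) (E : ℝ)
    (x : Fin 2 → ℝ) : freeForm E (evalSL E g • x) = freeForm E x := by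
  refine freeForm_evalSL_smul_of_infinite
    (((hinf.image (injOn_cos.mono fun _ h => h.1)).sdiff (toFinite {0, 1, -1})).mono ?_) E
  rintro _ ⟨⟨k, ⟨-, hk⟩, rfl⟩, hne⟩
  simp only [mem_insert_iff, mem_singleton_iff, not_or] at hne
  have hlt : Real.cos k ^ 2 < 1 := (cos_sq_le_one k).lt_of_ne fun h =>
    (sq_eq_one_iff.1 h).elim hne.2.1 hne.2.2
  exact freeForm_loop_of_lyapunov hconc hμ hlps hk hlt hne.1 hj hg x

end Loops

section BoundedSolutions

open Polynomial

lemma norm_toLp_sq (x : Fin 2 → ℝ) : ‖WithLp.toLp 2 x‖ ^ 2 = x 0 ^ 2 + x 1 ^ 2 := by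
  simp [EuclideanSpace.norm_sq_eq, Fin.sum_univ_two]

lemma freeForm_le {E : ℝ} (hE : |E| ≤ 1) (x : Fin 2 → ℝ) :
    freeForm E x ≤ 2 * (x 0 ^ 2 + x 1 ^ 2) := by
  have h := le_freeForm (-E) x
  rw [freeForm_apply, abs_neg] at h
  rw [freeForm_apply]
  nlinarith [sq_nonneg (x 0), sq_nonneg (x 1)]

lemma norm_sl_le_of_freeForm {E : ℝ} (hE : |E| < 1) {g : SL(2, ℝ)}
    (hg : ∀ x, freeForm E (g • x) = freeForm E x) : ‖g‖ ≤ √(2 / (1 - |E|)) := by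
  rw [norm_sl_def, cstar_norm_def]
  refine ContinuousLinearMap.opNorm_le_bound _ (sqrt_nonneg _) fun x => ?_
  refine (sq_le_sq₀ (norm_nonneg _) (by positivity)).1 ?_
  have hE' : 0 < 1 - |E| := sub_pos.2 hE
  have hlow := le_freeForm E (g • x.ofLp)
  have hup := freeForm_le hE.le x.ofLp
  rw [hg, ← norm_toLp_sq] at hlow
  rw [← norm_toLp_sq] at hup
  rw [mul_pow, sq_sqrt (by positivity), div_mul_eq_mul_div, le_div_iff₀' hE']
  exact hlow.trans hup

lemma map_pathProd {G G' : Type*} [Monoid G] [Monoid G'] (f : G →* G') (M : ℕ → ℕ → G)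
    (ω : ℤ → ℕ) (s : ℤ) (n : ℕ) :
    f (pathProd M ω s n) = pathProd (fun a b => f (M a b)) ω s n := by
  induction n with
  | zero => exact map_one f
  | succ n ih => rw [pathProd, pathProd, map_mul, ih]

section Paths

variable {ℓ : ℕ} {W : Set (ℕ × ℕ)} {μ : Measure (ℤ → ℕ)} [IsProbabilityMeasure μ] {E : ℝ}

-- A path from the fixed letter is completed to a loop by one of finitely many return paths.
lemma exists_norm_evalSL_le (hconc : ∀ᵐ ω ∂μ, ω ∈ SFT ℓ W) (herg : Ergodic shift μ) (hE : |E| < 1)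
    {j : ℕ} (hj : PosEdge μ j j) (hloop : ∀ g, IsPathProd (transferPoly ℓ) (PosEdge μ) j j g →
      ∀ x, freeForm E (evalSL E g • x) = freeForm E x) :
    ∃ C, ∀ b c g, PosEdge μ b c → IsPathProd (transferPoly ℓ) (PosEdge μ) j b g →
      ‖evalSL E g‖ ≤ C := by
  have hback : ∀ b, ∃ v, ∀ c, PosEdge μ b c → IsPathProd (transferPoly ℓ) (PosEdge μ) b j v := by
    intro b
    by_cases hb : μ {ω | ω 0 = b} ≠ 0
    · obtain ⟨v, hv⟩ := exists_isPathProd herg (transferPoly ℓ) hb hj.measure_letter_ne_zero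
      exact ⟨v, fun _ _ => hv⟩
    · exact ⟨1, fun c hc => absurd hc.measure_letter_ne_zero hb⟩
  choose v hv using hback
  obtain ⟨F, hF⟩ := ((Finset.Icc 1 ℓ).image fun b => ‖evalSL E (v b)‖).bddAbove
  refine ⟨F * √(2 / (1 - |E|)), fun b c g hbc hg => ?_⟩
  have hvF : ‖evalSL E (v b)‖ ≤ F :=
    hF (Finset.mem_image_of_mem _ (Finset.mem_Icc.2 (hbc.letters hconc).1))
  calc ‖evalSL E g‖ = ‖(evalSL E (v b))⁻¹ * evalSL E (v b * g)‖ := by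
        rw [map_mul, inv_mul_cancel_left]
    _ ≤ ‖evalSL E (v b)‖ * ‖evalSL E (v b * g)‖ := by
        rw [← norm_sl_inv (evalSL E (v b))]
        exact norm_sl_mul_le _ _
    _ ≤ F * √(2 / (1 - |E|)) :=
        mul_le_mul hvF (norm_sl_le_of_freeForm hE (hloop _ (hg.trans (hv b c hbc))))
          (norm_sl_nonneg _) ((norm_sl_nonneg _).trans hvF)

lemma exists_norm_pathProd_le (hconc : ∀ᵐ ω ∂μ, ω ∈ SFT ℓ W) (herg : Ergodic shift μ)
    (hlps : LocalProductStructure ℓ W μ) (hsupp : FullSupport ℓ W μ)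
    (hfix : ∃ q ∈ SFT ℓ W, shift q = q)
    (hinf : {k ∈ Icc (0 : ℝ) π | Tendsto (fun n : ℕ => (1 / (n : ℝ)) *
      ∫ ω, Real.log ‖AIter k ω n‖ ∂μ) atTop (𝓝 0)}.Infinite)
    {p : ℤ → ℕ} (hp : p ∈ SFT ℓ W) (hE : |E| < 1) :
    ∃ C, ∀ n : ℕ, ‖pathProd (transfer ℓ E) p 0 n‖ ≤ C := by
  obtain ⟨q, hq, hqs⟩ := hfix
  have hj : PosEdge μ (q 0) (q 0) := by
    have h := posEdge_of_mem hsupp hq 0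
    rwa [show q (0 + 1) = q 0 from congrFun hqs 0] at h
  have hpe := posEdge_of_mem hsupp hp
  obtain ⟨C, hC⟩ := exists_norm_evalSL_le hconc herg hE hj fun g hg =>
    freeForm_loop hconc herg.toMeasurePreserving hlps hinf hj hg E
  obtain ⟨g₀, hg₀⟩ := exists_isPathProd herg (transferPoly ℓ) hj.measure_letter_ne_zero
    (hpe 0).measure_letter_ne_zero
  refine ⟨C * ‖evalSL E g₀‖, fun n => ?_⟩
  calc ‖pathProd (transfer ℓ E) p 0 n‖
      = ‖evalSL E (pathProd (transferPoly ℓ) p 0 n * g₀) * (evalSL E g₀)⁻¹‖ := by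
        rw [map_mul, mul_inv_cancel_right, map_pathProd]
        rfl
    _ ≤ ‖evalSL E (pathProd (transferPoly ℓ) p 0 n * g₀)‖ * ‖evalSL E g₀‖ := by
        rw [← norm_sl_inv (evalSL E g₀)]
        exact norm_sl_mul_le _ _
    _ ≤ C * ‖evalSL E g₀‖ :=
        mul_le_mul_of_nonneg_right (hC _ _ _ (hpe n) (hg₀.pathProd_mul hpe n)) (norm_sl_nonneg _)

end Paths

/-- The sequence `u` solves the eigenvalue equation of the Jacobi-type operator `H̃_p` at the
energy `E` on the half-line, with the denominators cleared. -/
def IsHalfLineSolution (p : ℤ → ℕ) (E : ℝ) (u : ℕ → ℝ) : Prop :=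
  ∀ n : ℕ, (p (n + 1) : ℝ) * u (n + 2) + p n * u n = (p (n + 1) + p n) * E * u (n + 1)

lemma transfer_smul {ℓ a b : ℕ} (ha : 1 ≤ a ∧ a ≤ ℓ) (hb : 1 ≤ b ∧ b ≤ ℓ) (E : ℝ)
    (x : Fin 2 → ℝ) : transfer ℓ E a b • x =
      √((b : ℝ) / a) • ![((b : ℝ) + a) / b * E * x 0 - (a : ℝ) / b * x 1, x 0] := by
  ext i
  rw [sl_smul_apply, coe_transfer ha hb]
  fin_cases i <;> simp [mul_add, mul_assoc, sub_eq_add_neg]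

/-- The solution on the half-line obtained by applying the normalized transfer matrices to the first
basis vector and undoing the normalization. -/
noncomputable def transferSolution (ℓ : ℕ) (E : ℝ) (p : ℤ → ℕ) (n : ℕ) : ℝ :=
  (pathProd (transfer ℓ E) p 0 n • ![(1 : ℝ), 0]) 1 / √(p n)

section Solution

variable {ℓ : ℕ} {p : ℤ → ℕ}

lemma pathProd_transfer_succ_smul (hp : ∀ n, 1 ≤ p n ∧ p n ≤ ℓ) (E : ℝ) (n : ℕ)
    (x : Fin 2 → ℝ) :
    pathProd (transfer ℓ E) p 0 (n + 1) • x = √((p (n + 1) : ℝ) / p n) •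
      ![((p (n + 1) : ℝ) + p n) / p (n + 1) * E * (pathProd (transfer ℓ E) p 0 n • x) 0 -
        (p n : ℝ) / p (n + 1) * (pathProd (transfer ℓ E) p 0 n • x) 1,
        (pathProd (transfer ℓ E) p 0 n • x) 0] := by
  rw [pathProd, zero_add, mul_smul, transfer_smul (hp _) (hp _)]

lemma transferSolution_succ (hp : ∀ n, 1 ≤ p n ∧ p n ≤ ℓ) (E : ℝ) (n : ℕ) :
    transferSolution ℓ E p (n + 1) =
      (pathProd (transfer ℓ E) p 0 n • ![(1 : ℝ), 0]) 0 / √(p n) := by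
  have hpn : √(p (n + 1) : ℝ) ≠ 0 := (sqrt_pos.2 (Nat.cast_pos.2 (hp (n + 1)).1)).ne'
  rw [transferSolution, pathProd_transfer_succ_smul hp, sqrt_div' _ (Nat.cast_nonneg _),
    Nat.cast_add_one, Pi.smul_apply, cons_val_one, cons_val_zero, smul_eq_mul]
  field_simp

lemma isHalfLineSolution_transferSolution (hp : ∀ n, 1 ≤ p n ∧ p n ≤ ℓ) (E : ℝ) :
    IsHalfLineSolution p E (transferSolution ℓ E p) := by
  intro n
  have hp0 : ∀ n, (0 : ℝ) < p n := fun n => Nat.cast_pos.2 (hp n).1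
  have h0 := sqrt_pos.2 (hp0 n)
  have hp1 := hp0 (n + 1)
  rw [transferSolution_succ hp, transferSolution_succ hp, pathProd_transfer_succ_smul hp,
    transferSolution, sqrt_div' _ (Nat.cast_nonneg _), Nat.cast_add_one, Pi.smul_apply,
    cons_val_zero, smul_eq_mul]
  field_simp
  ring

lemma transferSolution_sq_add_sq_mem_Icc (hp : ∀ n, 1 ≤ p n ∧ p n ≤ ℓ) {E C : ℝ}
    (hC : ∀ n : ℕ, ‖pathProd (transfer ℓ E) p 0 n‖ ≤ C) (n : ℕ) :
    transferSolution ℓ E p n ^ 2 + transferSolution ℓ E p (n + 1) ^ 2 ∈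
      Icc (1 / (ℓ * C ^ 2)) (C ^ 2) := by
  set g := pathProd (transfer ℓ E) p 0 n
  have he : ‖WithLp.toLp 2 ![(1 : ℝ), 0]‖ = 1 :=
    (sq_eq_sq₀ (norm_nonneg _) zero_le_one).1 (by simp [norm_toLp_sq])
  have hup := norm_toLp_smul_le g ![(1 : ℝ), 0]
  have hlow := norm_toLp_smul_le g⁻¹ (g • ![(1 : ℝ), 0])
  rw [inv_smul_smul, norm_sl_inv, he] at hlow
  rw [he, mul_one] at hup
  have hC0 : 0 < C := (zero_lt_one.trans_le (one_le_norm_sl g)).trans_le (hC n)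
  have hp1 : (1 : ℝ) ≤ p n := Nat.one_le_cast.2 (hp n).1
  have hpl : (p n : ℝ) ≤ ℓ := Nat.cast_le.2 (hp n).2
  have hl : (0 : ℝ) < ℓ := by linarith
  have hsum : transferSolution ℓ E p n ^ 2 + transferSolution ℓ E p (n + 1) ^ 2 =
      ‖WithLp.toLp 2 (g • ![(1 : ℝ), 0])‖ ^ 2 / p n := by
    rw [transferSolution_succ hp, transferSolution, norm_toLp_sq, div_pow, div_pow,
      sq_sqrt (Nat.cast_nonneg _), ← add_div, add_comm]
  rw [hsum]
  constructor
  · rw [div_le_div_iff₀ (by positivity) (by positivity), one_mul]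
    have h1 := hlow.trans (mul_le_mul_of_nonneg_right (hC n) (norm_nonneg _))
    calc (p n : ℝ) ≤ ℓ * 1 ^ 2 := by rwa [one_pow, mul_one]
      _ ≤ ℓ * (C * ‖WithLp.toLp 2 (g • ![(1 : ℝ), 0])‖) ^ 2 := by gcongr
      _ = _ := by ring
  · exact (div_le_self (sq_nonneg _) hp1).trans
      (pow_le_pow_left₀ (norm_nonneg _) (hup.trans (hC n)) 2)

end Solution

end BoundedSolutions

section Spectrum

lemma hasSum_sq_norm (u : L2Z) : HasSum (fun n => u n ^ 2) (‖u‖ ^ 2) := by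
  have h := lp.hasSum_inner (𝕜 := ℝ) u u
  rw [real_inner_self_eq_norm_sq] at h
  exact h.congr_fun fun n => by simp [sq]

lemma summable_mul_sq {w : ℤ → ℝ} {C : ℝ} (h0 : ∀ n, 0 ≤ w n) (hC : ∀ n, w n ≤ C) (u : L2Z) :
    Summable fun n => w n * u n ^ 2 :=
  .of_nonneg_of_le (fun n => mul_nonneg (h0 n) (sq_nonneg _))
    (fun n => mul_le_mul_of_nonneg_right (hC n) (sq_nonneg _))
    ((hasSum_sq_norm u).summable.mul_left C)

/-- The square of the `ℓ²` norm weighted by `p n + p (n - 1)`, for which the Jacobi-type operator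
`H̃_p` is self-adjoint. -/
noncomputable def jacobiEnergy (p : ℤ → ℕ) (u : L2Z) : ℝ :=
  ∑' n, ((p n : ℝ) + p (n - 1)) * u n ^ 2

variable {ℓ : ℕ} {p : ℤ → ℕ} {H : L2Z →L[ℝ] L2Z}

lemma summable_jacobiEnergy (hp : ∀ n, p n ≤ ℓ) (u : L2Z) :
    Summable fun n => ((p n : ℝ) + p (n - 1)) * u n ^ 2 :=
  summable_mul_sq (fun _ => by positivity)
    (fun n => add_le_add (Nat.cast_le.2 (hp n)) (Nat.cast_le.2 (hp (n - 1)))) u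

lemma jacobiEnergy_le (hp : ∀ n, p n ≤ ℓ) (u : L2Z) : jacobiEnergy p u ≤ 2 * ℓ * ‖u‖ ^ 2 := by
  have h := (hasSum_sq_norm u).mul_left (2 * (ℓ : ℝ))
  refine ((summable_jacobiEnergy hp u).tsum_le_tsum (fun n => ?_) h.summable).trans h.tsum_eq.le
  refine mul_le_mul_of_nonneg_right ?_ (sq_nonneg _)
  exact two_mul (ℓ : ℝ) ▸ add_le_add (Nat.cast_le.2 (hp n)) (Nat.cast_le.2 (hp (n - 1)))

lemma le_jacobiEnergy (hp : ∀ n, 1 ≤ p n ∧ p n ≤ ℓ) (u : L2Z) :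
    2 * ‖u‖ ^ 2 ≤ jacobiEnergy p u := by
  have h := (hasSum_sq_norm u).mul_left 2
  refine h.tsum_eq.ge.trans
    (h.summable.tsum_le_tsum (fun n => ?_) (summable_jacobiEnergy (fun n => (hp n).2) u))
  refine mul_le_mul_of_nonneg_right ?_ (sq_nonneg _)
  exact one_add_one_eq_two (R := ℝ) ▸
    add_le_add (Nat.one_le_cast.2 (hp n).1) (Nat.one_le_cast.2 (hp (n - 1)).1)

lemma add_mul_weightedMean_sq_le {a b : ℝ} (ha : 0 < a) (hb : 0 < b) (x y : ℝ) :
    (a + b) * (a / (a + b) * x + b / (a + b) * y) ^ 2 ≤ a * x ^ 2 + b * y ^ 2 := by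
  have h : (a + b) * (a / (a + b) * x + b / (a + b) * y) ^ 2 = (a * x + b * y) ^ 2 / (a + b) := by
    field_simp
  rw [h, div_le_iff₀ (add_pos ha hb)]
  nlinarith [mul_nonneg (mul_pos ha hb).le (sq_nonneg (x - y))]

lemma jacobiEnergy_apply_le (hp : ∀ n, 1 ≤ p n ∧ p n ≤ ℓ) (hH : IsJacobiOp p H) (u : L2Z) :
    jacobiEnergy p (H u) ≤ jacobiEnergy p u := by
  have hp0 : ∀ n, (0 : ℝ) < p n := fun n => Nat.cast_pos.2 (hp n).1
  have hpl : ∀ n, (p n : ℝ) ≤ ℓ := fun n => Nat.cast_le.2 (hp n).2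
  have hs := (summable_mul_sq (fun n => (hp0 n).le) hpl u).hasSum
  have hs' := (summable_mul_sq (fun n => (hp0 (n - 1)).le) (fun n => hpl (n - 1)) u).hasSum
  have hright : HasSum (fun n => (p n : ℝ) * u (n + 1) ^ 2)
      (∑' n, (p (n - 1) : ℝ) * u n ^ 2) := by
    simpa [Function.comp_def] using (Equiv.addRight (1 : ℤ)).hasSum_iff.2 hs'
  have hleft : HasSum (fun n => (p (n - 1) : ℝ) * u (n - 1) ^ 2) (∑' n, (p n : ℝ) * u n ^ 2) := by
    simpa [Function.comp_def] using (Equiv.subRight (1 : ℤ)).hasSum_iff.2 hs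
  have henergy : HasSum (fun n => ((p n : ℝ) + p (n - 1)) * u n ^ 2) _ :=
    (hs.add hs').congr_fun fun n => add_mul _ _ _
  rw [jacobiEnergy, jacobiEnergy, henergy.tsum_eq, add_comm, ← (hright.add hleft).tsum_eq]
  refine (summable_jacobiEnergy (fun n => (hp n).2) _).tsum_le_tsum (fun n => ?_)
    (hright.add hleft).summable
  rw [hH u n]
  exact add_mul_weightedMean_sq_le (hp0 n) (hp0 (n - 1)) _ _

lemma norm_jacobi_pow_le (hp : ∀ n, 1 ≤ p n ∧ p n ≤ ℓ) (hH : IsJacobiOp p H) (m : ℕ) :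
    ‖H ^ m‖ ≤ √ℓ := by
  refine ContinuousLinearMap.opNorm_le_bound _ (sqrt_nonneg _) fun u => ?_
  have hmono : jacobiEnergy p ((H ^ m) u) ≤ jacobiEnergy p u := by
    induction m with
    | zero => exact le_rfl
    | succ m ih =>
      rw [pow_succ']
      exact (jacobiEnergy_apply_le hp hH ((H ^ m) u)).trans ih
  refine (sq_le_sq₀ (norm_nonneg _) (by positivity)).1 ?_
  rw [mul_pow, sq_sqrt (Nat.cast_nonneg _)]
  linarith [le_jacobiEnergy hp ((H ^ m) u), jacobiEnergy_le (fun n => (hp n).2) u]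

lemma abs_le_one_of_mem_spectrum {X : Type*} [NormedAddCommGroup X] [NormedSpace ℝ X]
    [CompleteSpace X] {T : X →L[ℝ] X} {C : ℝ} (hT : ∀ m : ℕ, ‖T ^ m‖ ≤ C) {E : ℝ}
    (hE : E ∈ spectrum ℝ T) : |E| ≤ 1 := by
  by_contra! h
  obtain ⟨m, hm⟩ := pow_unbounded_of_one_lt C h
  have h1 := spectrum.norm_le_norm_mul_of_mem (spectrum.pow_mem_pow T m hE)
  have h2 : ‖T ^ m‖ * ‖(1 : X →L[ℝ] X)‖ ≤ C * 1 :=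
    mul_le_mul (hT m) ContinuousLinearMap.norm_id_le (norm_nonneg _) ((norm_nonneg _).trans (hT m))
  rw [norm_pow, norm_eq_abs] at h1
  linarith

lemma exists_norm_le_of_notMem_spectrum {X : Type*} [NormedAddCommGroup X] [NormedSpace ℝ X]
    {T : X →L[ℝ] X} {E : ℝ} (hE : E ∉ spectrum ℝ T) : ∃ K, ∀ w, ‖w‖ ≤ K * ‖E • w - T w‖ := by
  obtain ⟨U, hU⟩ := spectrum.notMem_iff.1 hE
  refine ⟨‖(↑U⁻¹ : X →L[ℝ] X)‖, fun w => ?_⟩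
  have hUw : (U : X →L[ℝ] X) w = E • w - T w := by
    rw [hU, Algebra.algebraMap_eq_smul_one]
    rfl
  calc ‖w‖ = ‖(↑U⁻¹ : X →L[ℝ] X) ((U : X →L[ℝ] X) w)‖ := by
        rw [← mul_apply_eq_comp, Units.inv_mul, one_apply_eq_self]
    _ ≤ _ := by
        rw [← hUw]
        exact ContinuousLinearMap.le_opNorm _ _

section Truncation

/-- The restriction of a half-line sequence to `{0, …, N - 1}`, extended by zero. -/
noncomputable def truncate (u : ℕ → ℝ) (N : ℕ) : L2Z :=
  ∑ m ∈ Finset.Ico (0 : ℤ) N, lp.single 2 m (u m.toNat)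

variable {u : ℕ → ℝ} {N : ℕ} {E C : ℝ}

lemma truncate_apply (u : ℕ → ℝ) (N : ℕ) (m : ℤ) :
    truncate u N m = if m ∈ Finset.Ico (0 : ℤ) N then u m.toNat else 0 := by
  rw [truncate, lp.coeFn_sum, Finset.sum_apply]
  simp only [lp.single_apply, Pi.single_apply, Finset.sum_ite_eq]

lemma truncate_natCast {n : ℕ} (hn : n < N) : truncate u N n = u n := by
  rw [truncate_apply, if_pos (Finset.mem_Ico.2 (by omega)), Int.toNat_natCast]

lemma truncate_of_notMem {m : ℤ} (hm : ¬(0 ≤ m ∧ m < N)) : truncate u N m = 0 := by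
  rw [truncate_apply, if_neg (by rwa [Finset.mem_Ico])]

lemma abs_truncate_le (hu : ∀ n, |u n| ≤ C) (m : ℤ) : |truncate u N m| ≤ C := by
  rw [truncate_apply]
  split_ifs
  · exact hu _
  · rw [abs_zero]
    exact (abs_nonneg _).trans (hu 0)

lemma norm_truncate_sq (u : ℕ → ℝ) (N : ℕ) :
    ‖truncate u N‖ ^ 2 = ∑ n ∈ Finset.range N, u n ^ 2 := by
  have h := (hasSum_sq_norm (truncate u N)).unique (hasSum_sum_of_ne_finset_zero
    (s := (Finset.range N).map Nat.castEmbedding) fun m hm => ?_)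
  · rw [h, Finset.sum_map]
    refine Finset.sum_congr rfl fun n hn => ?_
    rw [Nat.castEmbedding_apply, truncate_natCast (Finset.mem_range.1 hn)]
  · rw [truncate_of_notMem, zero_pow two_ne_zero]
    rintro ⟨h0, hN⟩
    exact hm (Finset.mem_map.2 ⟨m.toNat, by simpa [h0] using hN, Int.toNat_of_nonneg h0⟩)

lemma le_norm_truncate_sq {c : ℝ} (hu : ∀ n, c ≤ u n ^ 2 + u (n + 1) ^ 2) (N : ℕ) :
    c * N ≤ ‖truncate u (2 * N)‖ ^ 2 := by
  rw [norm_truncate_sq]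
  induction N with
  | zero => simp
  | succ N ih =>
    rw [mul_add, mul_one, Finset.sum_range_succ, Finset.sum_range_succ, Nat.cast_add_one]
    linarith [hu (2 * N)]

lemma residual_apply (hH : IsJacobiOp p H) (E : ℝ) (w : L2Z) (m : ℤ) :
    (E • w - H w : L2Z) m = E * w m - ((p m : ℝ) / (p m + p (m - 1)) * w (m + 1) +
      (p (m - 1) : ℝ) / (p m + p (m - 1)) * w (m - 1)) := by
  rw [lp.coeFn_sub, Pi.sub_apply, lp.coeFn_smul, Pi.smul_apply, hH w m, smul_eq_mul]

lemma residual_truncate_eq_zero (hp : ∀ n, 1 ≤ p n) (hH : IsJacobiOp p H)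
    (hu : IsHalfLineSolution p E u) {m : ℤ} (hm : m ∉ ({-1, 0, (N : ℤ) - 1, (N : ℤ)} : Finset ℤ)) :
    (E • truncate u N - H (truncate u N) : L2Z) m = 0 := by
  simp only [Finset.mem_insert, Finset.mem_singleton, not_or] at hm
  rw [residual_apply hH]
  by_cases h : 0 ≤ m ∧ m < (N : ℤ)
  · obtain ⟨n, rfl⟩ : ∃ n : ℕ, m = (n : ℤ) + 1 := ⟨(m - 1).toNat, by omega⟩
    have h1 : truncate u N ((n : ℤ) + 1) = u (n + 1) := by
      exact_mod_cast truncate_natCast (n := n + 1) (by omega)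
    have h2 : truncate u N ((n : ℤ) + 1 + 1) = u (n + 2) := by
      exact_mod_cast truncate_natCast (n := n + 2) (by omega)
    rw [add_sub_cancel_right, h1, h2, truncate_natCast (by omega)]
    have hpn : (0 : ℝ) < p n := Nat.cast_pos.2 (hp n)
    field_simp
    linarith [hu n]
  · rw [truncate_of_notMem h, truncate_of_notMem (by omega), truncate_of_notMem (by omega)]
    simp only [mul_zero, add_zero, sub_zero]

lemma abs_residual_le (hp : ∀ n, 1 ≤ p n) (hH : IsJacobiOp p H) (hE : |E| ≤ 1) {w : L2Z}
    (hw : ∀ m, |w m| ≤ C) (m : ℤ) : |(E • w - H w : L2Z) m| ≤ 2 * C := by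
  have hpm : (0 : ℝ) < p m := Nat.cast_pos.2 (hp m)
  rw [residual_apply hH]
  calc _ ≤ |E| * |w m| + ((p m : ℝ) / (p m + p (m - 1)) * |w (m + 1)| +
        (p (m - 1) : ℝ) / (p m + p (m - 1)) * |w (m - 1)|) := by
        refine (abs_sub _ _).trans (add_le_add (abs_mul _ _).le ((abs_add_le _ _).trans_eq ?_))
        rw [abs_mul, abs_mul, abs_of_nonneg (by positivity : (0 : ℝ) ≤ p m / (p m + p (m - 1))),
          abs_of_nonneg (by positivity : (0 : ℝ) ≤ p (m - 1) / (p m + p (m - 1)))]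
    _ ≤ 1 * C + ((p m : ℝ) / (p m + p (m - 1)) * C +
        (p (m - 1) : ℝ) / (p m + p (m - 1)) * C) := by
        gcongr
        exacts [hw m, hw _, hw _]
    _ = 2 * C := by
        field_simp
        ring

lemma norm_residual_truncate_sq_le (hp : ∀ n, 1 ≤ p n) (hH : IsJacobiOp p H) (hE : |E| ≤ 1)
    (hu : IsHalfLineSolution p E u) (hC : ∀ n, |u n| ≤ C) (N : ℕ) :
    ‖E • truncate u N - H (truncate u N)‖ ^ 2 ≤ 4 * (2 * C) ^ 2 := by
  rw [(hasSum_sq_norm _).unique (hasSum_sum_of_ne_finset_zero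
    (s := {-1, 0, (N : ℤ) - 1, (N : ℤ)}) fun m hm => by
      rw [residual_truncate_eq_zero hp hH hu hm, zero_pow two_ne_zero])]
  refine (Finset.sum_le_card_nsmul _ _ ((2 * C) ^ 2) fun m _ => ?_).trans ?_
  · exact sq_le_sq.2 ((abs_residual_le hp hH hE (abs_truncate_le hC) m).trans (le_abs_self _))
  · rw [nsmul_eq_mul]
    exact mul_le_mul_of_nonneg_right (by exact_mod_cast Finset.card_le_four) (sq_nonneg _)

end Truncation

-- The truncations of the solution have unbounded norms and bounded residuals.
lemma mem_spectrum_of_isHalfLineSolution (hp : ∀ n, 1 ≤ p n) (hH : IsJacobiOp p H) {E : ℝ}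
    (hE : |E| ≤ 1) {u : ℕ → ℝ} (hu : IsHalfLineSolution p E u) {c C : ℝ} (hc : 0 < c)
    (hbd : ∀ n, u n ^ 2 + u (n + 1) ^ 2 ∈ Icc c C) : E ∈ spectrum ℝ H := by
  by_contra hE'
  obtain ⟨K, hK⟩ := exists_norm_le_of_notMem_spectrum hE'
  have huC : ∀ n, |u n| ≤ √C := fun n =>
    abs_le_sqrt ((le_add_of_nonneg_right (sq_nonneg _)).trans (hbd n).2)
  obtain ⟨N, hN⟩ := exists_nat_gt (K ^ 2 * (4 * (2 * √C) ^ 2) / c)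
  rw [div_lt_iff₀' hc] at hN
  refine hN.not_ge ?_
  set w := truncate u (2 * N)
  calc c * N ≤ ‖w‖ ^ 2 := le_norm_truncate_sq (fun n => (hbd n).1) N
    _ ≤ (K * ‖E • w - H w‖) ^ 2 := pow_le_pow_left₀ (norm_nonneg _) (hK w) 2
    _ = K ^ 2 * ‖E • w - H w‖ ^ 2 := mul_pow _ _ _
    _ ≤ _ := mul_le_mul_of_nonneg_left
        (norm_residual_truncate_sq_le hp hH hE hu huC _) (sq_nonneg _)

end Spectrum

theorem statement10_general {ℓ : ℕ} {W : Set (ℕ × ℕ)} {μ : Measure (ℤ → ℕ)}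
    [IsProbabilityMeasure μ] (hconc : ∀ᵐ ω ∂μ, ω ∈ SFT ℓ W) (herg : Ergodic shift μ)
    (hlps : LocalProductStructure ℓ W μ) (hsupp : FullSupport ℓ W μ)
    (hfix : ∃ q ∈ SFT ℓ W, shift q = q)
    (hinf : {k ∈ Icc (0 : ℝ) π | Tendsto (fun n : ℕ => (1 / (n : ℝ)) *
      ∫ ω, Real.log ‖AIter k ω n‖ ∂μ) atTop (𝓝 0)}.Infinite)
    {p : ℤ → ℕ} (hp : p ∈ SFT ℓ W) {H : L2Z →L[ℝ] L2Z} (hH : IsJacobiOp p H) :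
    spectrum ℝ H = Icc (-1 : ℝ) 1 := by
  refine Subset.antisymm
    (fun E hE => abs_le.1 (abs_le_one_of_mem_spectrum (norm_jacobi_pow_le hp.1 hH) hE)) ?_
  rw [← closure_Ioo (by norm_num : (-1 : ℝ) ≠ 1)]
  refine closure_minimal (fun E hE => ?_) (spectrum.isClosed H)
  obtain ⟨C, hC⟩ := exists_norm_pathProd_le hconc herg hlps hsupp hfix hinf hp (abs_lt.2 hE)
  have hC0 : 0 < C := zero_lt_one.trans_le ((one_le_norm_sl _).trans (hC 0))
  have hℓ : (0 : ℝ) < ℓ := Nat.cast_pos.2 ((hp.1 0).1.trans (hp.1 0).2)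
  exact mem_spectrum_of_isHalfLineSolution (fun n => (hp.1 n).1) hH (abs_lt.2 hE).le
    (isHalfLineSolution_transferSolution hp.1 E) (by positivity)
    (transferSolution_sq_add_sq_mem_Icc hp.1 hC)

/-- Suppose `μ` is a shift-ergodic Borel probability measure on `Ω` with a local
product structure and full support, the shift has a fixed point in `Ω`, and the
set `𝔏(A,μ) = {k ∈ [0,π] : L(A^{(k)}, μ) = 0}` is infinite.  Then for every
periodic point `p ∈ Ω`, the spectrum of `H̃_p` coincides with `[−1,1]`. -/
theorem statement10 (ℓ : ℕ) (hℓ : 1 < ℓ) (W : Set (ℕ × ℕ))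
    (μ : Measure (ℤ → ℕ)) [IsProbabilityMeasure μ]
    (hconc : μ (SFT ℓ W)ᶜ = 0)
    (herg : Ergodic shift μ)
    (hlps : LocalProductStructure ℓ W μ)
    (hsupp : FullSupport ℓ W μ)
    (hfix : ∃ q ∈ SFT ℓ W, shift q = q)
    (H : (ℤ → ℕ) → (L2Z →L[ℝ] L2Z))
    (hH : ∀ p, IsJacobiOp p (H p))
    (L : ℝ → ℝ)
    (hL : ∀ k : ℝ,
      Tendsto (fun n : ℕ => (1 / (n : ℝ)) * ∫ ω, Real.log ‖AIter k ω n‖ ∂μ)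
        atTop (𝓝 (L k)))
    (hinf : {k ∈ Icc (0 : ℝ) π | L k = 0}.Infinite) :
    ∀ p ∈ SFT ℓ W, (∃ n : ℕ, 1 ≤ n ∧ shift^[n] p = p) →
      spectrum ℝ (H p) = Icc (-1 : ℝ) 1 := by
  intro p hp _
  refine statement10_general (mem_ae_iff.2 hconc) herg hlps hsupp hfix (hinf.mono ?_) hp (hH p)
  rintro k ⟨hk, hLk⟩
  exact ⟨hk, hLk ▸ hL k⟩
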